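/- Let F be a centered real random variable with density f, unit variance, and Stein factor τ_F with E[|τ_F(F)|^{2+η}] < ∞ for some η > 0. Let Z ~ N(0,1) be independent of F, and suppose TV(√t F + √(1−t) x, F) ≤ κ(1+|x|) t^{-1}(1−t)^α for all x ∈ R, t ∈ (0,1], with κ, α > 0. Set Δ = E[(1 − τ_F(F))^2] and suppose Δ ≤ 1. Then D(F‖Z) ≤ ((η+1)/((1∧2α)η)) Δ |log Δ| + (C_η(η+1)/((1∧2α)η)) Δ, where C_η = 2(4κ+4)^{η/(η+1)} E[|Z|^{η+2}]^{1/(η+1)} (1 + E[|τ_F(F)|^{η+2}])^{1/(η+1)}. -/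

import Mathlib

open MeasureTheory ProbabilityTheory

/-- Total variation distance between two measures on `ℝ`. -/
noncomputable def tvDist (μ ν : MeasureTheory.Measure ℝ) : ℝ :=
  sSup {r : ℝ | ∃ s : Set ℝ, MeasurableSet s ∧ r = |(μ s).toReal - (ν s).toReal|}

section
open Set Filter Topology


lemma fub {a b : ℝ → ℝ} (ha : Measurable a) (hb : Measurable b) (c : ℝ) (hbi : Integrable b)
    (h : IntegrableOn (fun y => a y * ∫ t in Ioi y, |b t|) (Ioi c)) :
    IntegrableOn (fun t => b t * ∫ y in c..t, a y) (Ioi c) ∧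
    ∫ y in Ioi c, a y * ∫ t in Ioi y, b t = ∫ t in Ioi c, b t * ∫ y in c..t, a y := by
  set f : ℝ → ℝ → ℝ := fun y t => if c < y ∧ y < t then a y * b t else 0 with hf
  have hset : MeasurableSet {q : ℝ × ℝ | c < q.1 ∧ q.1 < q.2} :=
    (measurableSet_lt measurable_const measurable_fst).inter
      (measurableSet_lt measurable_fst measurable_snd)
  have hfm : Measurable (Function.uncurry f) := by
    have : Measurable (fun q : ℝ × ℝ => if c < q.1 ∧ q.1 < q.2 then a q.1 * b q.2 else 0) :=
      Measurable.ite hset ((ha.comp measurable_fst).mul (hb.comp measurable_snd)) measurable_const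
    exact this
  have e1 : ∀ y, f y = (if c < y then (Ioi y).indicator (fun t => a y * b t) else 0) := by
    intro y
    funext t
    by_cases h1 : c < y
    · by_cases h2 : y < t <;> simp [hf, h1, h2, indicator]
    · simp [hf, h1]
  have e2 : ∀ t, (fun y => f y t) = (Ioo c t).indicator (fun y => a y * b t) := by
    intro t
    funext y
    simp [hf, indicator]
  have i1 : ∀ y, ∫ t, f y t = (Ioi c).indicator (fun y => a y * ∫ t in Ioi y, b t) y := by
    intro y
    rw [e1]
    by_cases h1 : c < y
    · simp [h1, integral_indicator measurableSet_Ioi, integral_const_mul]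
    · simp [h1]
  have i1' : ∀ y, ∫ t, ‖f y t‖ = (Ioi c).indicator (fun y => |a y| * ∫ t in Ioi y, |b t|) y := by
    intro y
    by_cases h1 : c < y
    · have : (fun t => ‖f y t‖) = (Ioi y).indicator (fun t => |a y| * |b t|) := by
        funext t
        by_cases h2 : y < t <;> simp [hf, h1, h2, indicator, abs_mul]
      rw [this]
      simp [h1, integral_indicator measurableSet_Ioi, integral_const_mul]
    · simp [e1, h1]
  have i2 : ∀ t, ∫ y, f y t = (Ioi c).indicator (fun t => b t * ∫ y in c..t, a y) t := by
    intro t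
    rw [e2, integral_indicator measurableSet_Ioo]
    by_cases h1 : c < t
    · simp [h1, intervalIntegral.integral_of_le h1.le, integral_Ioc_eq_integral_Ioo,
        integral_mul_const, mul_comm]
    · simp [h1]
  have hint : Integrable (Function.uncurry f) (volume.prod volume) := by
    rw [integrable_prod_iff hfm.aestronglyMeasurable]
    constructor
    · refine Eventually.of_forall fun y => ?_
      simp only [Function.uncurry]
      show Integrable (f y)
      rw [e1]
      split_ifs
      · exact (hbi.const_mul (a y)).indicator measurableSet_Ioi
      · exact integrable_zero _ _ _
    · simp only [Function.uncurry]
      simp_rw [i1']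
      rw [integrable_indicator_iff measurableSet_Ioi]
      refine h.norm.congr (Eventually.of_forall fun y => ?_)
      simp only [norm_mul, Real.norm_eq_abs]
      congr 1
      exact abs_of_nonneg (integral_nonneg fun _ => abs_nonneg _)
  constructor
  · have := hint.integral_prod_right
    simp only [Function.uncurry] at this
    simp_rw [i2] at this
    rwa [integrable_indicator_iff measurableSet_Ioi] at this
  · have := integral_integral_swap hint
    simp_rw [i1, i2] at this
    rwa [integral_indicator measurableSet_Ioi, integral_indicator measurableSet_Ioi] at this

lemma lfub {a b : ℝ → ENNReal} (ha : Measurable a) (hb : Measurable b) (c : ℝ) :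
    ∫⁻ y in Ioi c, a y * ∫⁻ t in Ioi y, b t = ∫⁻ t in Ioi c, b t * ∫⁻ y in Ioo c t, a y := by
  set f : ℝ → ℝ → ENNReal := fun y t => if c < y ∧ y < t then a y * b t else 0 with hf
  have hset : MeasurableSet {q : ℝ × ℝ | c < q.1 ∧ q.1 < q.2} :=
    (measurableSet_lt measurable_const measurable_fst).inter
      (measurableSet_lt measurable_fst measurable_snd)
  have hfm : Measurable (Function.uncurry f) := by
    have : Measurable (fun q : ℝ × ℝ => if c < q.1 ∧ q.1 < q.2 then a q.1 * b q.2 else 0) :=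
      Measurable.ite hset ((ha.comp measurable_fst).mul (hb.comp measurable_snd)) measurable_const
    exact this
  have e1 : ∀ y, f y = (if c < y then (Ioi y).indicator (fun t => a y * b t) else 0) := by
    intro y
    funext t
    by_cases h1 : c < y
    · by_cases h2 : y < t <;> simp [hf, h1, h2, indicator]
    · simp [hf, h1]
  have e2 : ∀ t, (fun y => f y t) = (Ioo c t).indicator (fun y => a y * b t) := by
    intro t
    funext y
    simp [hf, indicator]
  have i1 : ∀ y, ∫⁻ t, f y t = (Ioi c).indicator (fun y => a y * ∫⁻ t in Ioi y, b t) y := by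
    intro y
    rw [e1]
    by_cases h1 : c < y
    · simp [h1, lintegral_indicator measurableSet_Ioi, lintegral_const_mul _ hb]
    · simp [h1]
  have i2 : ∀ t, ∫⁻ y, f y t = (Ioi c).indicator (fun t => b t * ∫⁻ y in Ioo c t, a y) t := by
    intro t
    rw [e2, lintegral_indicator measurableSet_Ioo]
    by_cases h1 : c < t
    · simp [h1, lintegral_mul_const _ ha, mul_comm]
    · simp [h1]
  have := lintegral_lintegral_swap (μ := volume) (ν := volume) hfm.aemeasurable
  simp_rw [i1, i2] at this
  rwa [lintegral_indicator measurableSet_Ioi, lintegral_indicator measurableSet_Ioi] at this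


noncomputable def PP (g : ℝ → ℝ) (x : ℝ) : ℝ := ∫ y in Ioi x, y * g y
noncomputable def GG (g : ℝ → ℝ) (x : ℝ) : ℝ := ∫ y in Ioi x, g y

structure HL (g τ : ℝ → ℝ) : Prop where
  gm : Measurable g
  g0 : ∀ x, 0 ≤ g x
  gi : Integrable g
  g2 : Integrable (fun x => x ^ 2 * g x)
  tm : Measurable τ
  tg : ∀ᵐ x, 0 < x → τ x * g x = PP g x
  ei : Integrable (fun x => (1 - τ x) ^ 2 * g x)
  p0 : 0 < PP g 0

lemma ac_lip {u p : ℝ → ℝ} {a b : ℝ} {s : Set ℝ} {K : NNReal} (hu : LipschitzOnWith K u s)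
    (hp : AbsolutelyContinuousOnInterval p a b) (hm : ∀ x ∈ uIcc a b, p x ∈ s) :
    AbsolutelyContinuousOnInterval (fun x => u (p x)) a b := by
  rw [absolutelyContinuousOnInterval_iff] at hp ⊢
  intro ε hε
  obtain ⟨δ, hδ, h⟩ := hp (ε / (K + 1)) (by positivity)
  refine ⟨δ, hδ, fun E hE hs => ?_⟩
  have h1 := h E hE hs
  have : ∑ i ∈ Finset.range E.1, dist (u (p (E.2 i).1)) (u (p (E.2 i).2)) ≤
      (K + 1) * ∑ i ∈ Finset.range E.1, dist (p (E.2 i).1) (p (E.2 i).2) := by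
    rw [Finset.mul_sum]
    refine Finset.sum_le_sum fun i hi => ?_
    have h3 := hu.dist_le_mul _ (hm _ (hE.1 i hi).1) _ (hm _ (hE.1 i hi).2)
    have h4 : (0:ℝ) ≤ dist (p (E.2 i).1) (p (E.2 i).2) := dist_nonneg
    nlinarith
  refine this.trans_lt ?_
  have h5 : (0:ℝ) < K + 1 := by positivity
  rw [lt_div_iff₀ h5] at h1
  linarith

namespace HL
variable {g τ : ℝ → ℝ}

lemma g1 (h : HL g τ) : Integrable (fun x => x * g x) := by
  refine (h.gi.add h.g2).mono' (by have := h.gm; fun_prop) (Eventually.of_forall fun x => ?_)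
  simp only [Pi.add_apply, norm_mul, Real.norm_eq_abs, abs_of_nonneg (h.g0 x)]
  have : |x| ≤ 1 + x ^ 2 := by nlinarith [sq_abs x, sq_nonneg (|x| - 1)]
  nlinarith [h.g0 x]

lemma P_sub (h : HL g τ) (x y : ℝ) : PP g x - PP g y = ∫ t in x..y, t * g t :=
  intervalIntegral.integral_Ioi_sub_Ioi' h.g1.integrableOn h.g1.integrableOn

lemma G_sub (h : HL g τ) (x y : ℝ) : GG g x - GG g y = ∫ t in x..y, g t :=
  intervalIntegral.integral_Ioi_sub_Ioi' h.gi.integrableOn h.gi.integrableOn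

lemma P_cont (h : HL g τ) : Continuous (PP g) := by
  have : PP g = fun y => PP g 0 - ∫ t in (0:ℝ)..y, t * g t := by
    funext y; rw [← h.P_sub]; ring
  rw [this]
  exact continuous_const.sub (intervalIntegral.continuous_primitive (fun _ _ => h.g1.intervalIntegrable) _)

lemma G_cont (h : HL g τ) : Continuous (GG g) := by
  have : GG g = fun y => GG g 0 - ∫ t in (0:ℝ)..y, g t := by
    funext y; rw [← h.G_sub]; ring
  rw [this]
  exact continuous_const.sub (intervalIntegral.continuous_primitive (fun _ _ => h.gi.intervalIntegrable) _)

lemma P_nonneg (h : HL g τ) {x : ℝ} (hx : 0 ≤ x) : 0 ≤ PP g x :=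
  setIntegral_nonneg measurableSet_Ioi fun y hy =>
    mul_nonneg (hx.trans (le_of_lt hy)) (h.g0 y)

lemma G_nonneg (h : HL g τ) (x : ℝ) : 0 ≤ GG g x :=
  setIntegral_nonneg measurableSet_Ioi fun y _ => h.g0 y

lemma P_anti (h : HL g τ) {x y : ℝ} (hx : 0 ≤ x) (hxy : x ≤ y) : PP g y ≤ PP g x := by
  have := h.P_sub x y
  have h2 : 0 ≤ ∫ t in x..y, t * g t :=
    intervalIntegral.integral_nonneg hxy fun t ht => mul_nonneg (hx.trans ht.1) (h.g0 t)
  linarith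

lemma G_anti (h : HL g τ) {x y : ℝ} (hxy : x ≤ y) : GG g y ≤ GG g x := by
  have := h.G_sub x y
  have h2 : 0 ≤ ∫ t in x..y, g t :=
    intervalIntegral.integral_nonneg hxy fun t ht => (h.g0 t)
  linarith

lemma xG_le (h : HL g τ) (x : ℝ) : x * GG g x ≤ PP g x := by
  unfold GG PP
  rw [← integral_const_mul]
  refine setIntegral_mono_on (h.gi.const_mul x).integrableOn h.g1.integrableOn measurableSet_Ioi ?_
  intro y hy
  exact mul_le_mul_of_nonneg_right (le_of_lt hy) (h.g0 y)

/-- `P0 G(a) ≤ P(a) G(0)` -/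
lemma PG_le (h : HL g τ) {a : ℝ} (ha : 0 ≤ a) : PP g 0 * GG g a ≤ PP g a * GG g 0 := by
  have h1 := h.P_sub 0 a
  have h2 := h.G_sub 0 a
  have h3 : ∫ t in (0:ℝ)..a, t * g t ≤ a * ∫ t in (0:ℝ)..a, g t := by
    rw [← intervalIntegral.integral_const_mul]
    refine intervalIntegral.integral_mono_on ha h.g1.intervalIntegrable
      (h.gi.const_mul a).intervalIntegrable fun t ht => ?_
    exact mul_le_mul_of_nonneg_right ht.2 (h.g0 t)
  have h4 := h.xG_le a
  have h5 := h.G_nonneg a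
  have h6 := h.G_anti ha
  have h7 := h.P_nonneg ha
  have e1 : PP g 0 ≤ PP g a + a * (GG g 0 - GG g a) := by rw [h2]; linarith
  calc PP g 0 * GG g a ≤ (PP g a + a * (GG g 0 - GG g a)) * GG g a := by gcongr
    _ = PP g a * GG g a + (a * GG g a) * (GG g 0 - GG g a) := by ring
    _ ≤ PP g a * GG g a + PP g a * (GG g 0 - GG g a) := by
        have : 0 ≤ GG g 0 - GG g a := by linarith
        gcongr
    _ = _ := by ring

lemma ae_zero (h : HL g τ) {x : ℝ} (hx : 0 ≤ x) (hP : PP g x = 0) : ∀ᵐ y, x < y → g y = 0 := by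
  have h1 := (setIntegral_eq_zero_iff_of_nonneg_ae (s := Ioi x) (μ := volume) (f := fun y => y * g y)
    ((ae_restrict_iff' measurableSet_Ioi).2 (Eventually.of_forall fun y hy =>
      mul_nonneg (hx.trans (le_of_lt hy)) (h.g0 y))) h.g1.integrableOn).1 hP
  have h2 := (ae_restrict_iff' measurableSet_Ioi).1 h1
  filter_upwards [h2] with y hy hxy
  have := hy hxy
  simp only [Pi.zero_apply, mul_eq_zero] at this
  have h3 : y ≠ 0 := (hx.trans_lt hxy).ne'
  tauto

lemma P_pos (h : HL g τ) : ∀ᵐ x, 0 < x → g x ≠ 0 → 0 < PP g x := by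
  by_cases hb : ∃ b, 0 ≤ b ∧ PP g b = 0
  · -- infimum
    set S := {b | 0 ≤ b ∧ PP g b = 0}
    have hS : S.Nonempty := hb
    have hbd : BddBelow S := ⟨0, fun b hb => hb.1⟩
    have hcl : IsClosed S := (isClosed_le continuous_const continuous_id).inter
      (isClosed_eq h.P_cont continuous_const)
    have hmem : sInf S ∈ S := hcl.csInf_mem hS hbd
    have hne : ∀ᵐ x : ℝ, x ≠ sInf S := Measure.ae_ne volume (sInf S)
    filter_upwards [h.ae_zero hmem.1 hmem.2, hne] with x h1 h2 h3 h4
    by_contra h5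
    have h6 : PP g x = 0 := le_antisymm (not_lt.1 h5) (h.P_nonneg h3.le)
    have h7 : sInf S ≤ x := csInf_le hbd ⟨h3.le, h6⟩
    exact h4 (h1 (lt_of_le_of_ne h7 (Ne.symm h2)))
  · push Not at hb
    exact Eventually.of_forall fun x hx _ => lt_of_le_of_ne (h.P_nonneg hx.le) (Ne.symm (hb x hx.le))

lemma ftc (h : HL g τ) {u u' : ℝ → ℝ} (hu : ContDiffOn ℝ 1 u (Ioi 0))
    (hu' : ∀ s, 0 < s → HasDerivAt u (u' s) s) {c d : ℝ} (hc : 0 ≤ c) (hcd : c ≤ d)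
    (hd : 0 < PP g d) :
    IntervalIntegrable (fun y => u' (PP g y) * (y * g y)) volume c d ∧
    ∫ y in c..d, u' (PP g y) * (y * g y) = u (PP g c) - u (PP g d) := by
  have hsub : Icc (PP g d) (PP g c) ⊆ Ioi 0 := fun x hx => lt_of_lt_of_le hd hx.1
  obtain ⟨K, hK⟩ := (hu.mono hsub).exists_lipschitzOnWith (by decide) (convex_Icc _ _) isCompact_Icc
  have hI : AbsolutelyContinuousOnInterval (fun x => ∫ t in c..x, t * g t) c d :=
    h.g1.intervalIntegrable.absolutelyContinuousOnInterval_intervalIntegral left_mem_uIcc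
  have hneg : LipschitzOnWith 1 (fun z : ℝ => PP g c - z) univ := by
    refine LipschitzOnWith.of_dist_le_mul fun x _ y _ => ?_
    simp only [Real.dist_eq, NNReal.coe_one, one_mul]
    rw [abs_sub_comm x y]; apply le_of_eq; congr 1; ring
  have hP : AbsolutelyContinuousOnInterval (PP g) c d := by
    have := ac_lip hneg hI (fun _ _ => mem_univ _)
    convert this using 2 with x
    rw [← h.P_sub]; ring
  have hmem : ∀ x ∈ uIcc c d, PP g x ∈ Icc (PP g d) (PP g c) := by
    intro x hx
    rw [uIcc_of_le hcd] at hx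
    exact ⟨h.P_anti (hc.trans hx.1) hx.2, h.P_anti hc hx.1⟩
  have hac := ac_lip hK hP hmem
  have hae : ∀ᵐ x, x ∈ uIoc c d → deriv (fun x => u (PP g x)) x = -(u' (PP g x) * (x * g x)) := by
    filter_upwards [LocallyIntegrable.ae_hasDerivAt_integral h.g1.locallyIntegrable] with x hx hx2
    have h1 : HasDerivAt (PP g) (-(x * g x)) x := by
      have := (hx c).const_sub (PP g c)
      refine this.congr_of_eventuallyEq (Eventually.of_forall fun z => ?_)
      show PP g z = PP g c - ∫ t in c..z, t * g t
      rw [← h.P_sub]; ring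
    have h2 : 0 < PP g x := by
      have := hmem x (uIoc_subset_uIcc hx2)
      exact lt_of_lt_of_le hd this.1
    have := (hu' _ h2).comp x h1
    have h3 := this.deriv
    simp only [Function.comp_def] at h3
    rw [h3]; ring
  have h4 := hac.integral_deriv_eq_sub
  have h5 := hac.intervalIntegrable_deriv
  constructor
  · have := h5.neg
    refine this.congr_ae ?_
    rw [EventuallyEq, ae_restrict_iff' measurableSet_uIoc]
    filter_upwards [hae] with x hx hx2
    simp [hx hx2]
  · rw [intervalIntegral.integral_congr_ae hae, intervalIntegral.integral_neg] at h4
    linarith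

end HL


namespace HL
variable {g τ : ℝ → ℝ}

lemma exhaust (h : HL g τ) {H : ℝ → ENNReal} {B : ENNReal} {c : ℝ} (hc : 0 ≤ c)
    (hz : ∀ᵐ y, c < y → PP g y = 0 → H y = 0)
    (hd : ∀ d, c < d → 0 < PP g d → ∫⁻ y in Ioc c d, H y ≤ B) : ∫⁻ y in Ioi c, H y ≤ B := by
  let S : {q : ℚ // c < q ∧ 0 < PP g q} → Set ℝ := fun q => Ioc c q
  have hU : Ioi c ∩ {y | 0 < PP g y} = ⋃ q, S q := by
    ext y
    simp only [mem_inter_iff, mem_Ioi, mem_ofPred_eq, mem_iUnion]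
    constructor
    · rintro ⟨h1, h2⟩
      have h3 : ∀ᶠ z in 𝓝 y, 0 < PP g z := (h.P_cont.tendsto y).eventually (lt_mem_nhds h2)
      obtain ⟨ε, hε, h4⟩ := Metric.eventually_nhds_iff.1 h3
      obtain ⟨q, hq1, hq2⟩ := exists_rat_btwn (show y < y + ε by linarith)
      refine ⟨⟨q, h1.trans hq1, h4 ?_⟩, h1, hq1.le⟩
      rw [Real.dist_eq, abs_of_pos (by linarith)]; linarith
    · rintro ⟨⟨q, h1, h2⟩, h3, h4⟩
      exact ⟨h3, lt_of_lt_of_le h2 (h.P_anti (hc.trans h3.le) h4)⟩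
  have hmeas : MeasurableSet {y | 0 < PP g y} := (isOpen_lt continuous_const h.P_cont).measurableSet
  have e : ∫⁻ y in Ioi c, H y = ∫⁻ y in Ioi c ∩ {y | 0 < PP g y}, H y := by
    rw [← lintegral_indicator measurableSet_Ioi,
      ← lintegral_indicator (measurableSet_Ioi.inter hmeas)]
    refine lintegral_congr_ae ?_
    filter_upwards [hz] with y hy
    by_cases h1 : c < y
    · by_cases h2 : 0 < PP g y
      · simp [indicator, h1, h2]
      · have h3 : PP g y = 0 := le_antisymm (not_lt.1 h2) (h.P_nonneg (hc.trans h1.le))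
        simp [indicator, h1, hy h1 h3]
    · simp [indicator, h1]
  rw [e, hU]
  have hdir : Directed (· ⊆ ·) S := by
    intro p q
    rcases le_total (p : ℚ) (q : ℚ) with h1 | h1
    · exact ⟨q, Ioc_subset_Ioc_right (by exact_mod_cast h1), subset_rfl⟩
    · exact ⟨p, subset_rfl, Ioc_subset_Ioc_right (by exact_mod_cast h1)⟩
  rw [setLIntegral_iUnion_of_directed _ hdir]
  exact iSup_le fun q => hd q q.2.1 q.2.2

lemma lint_ftc (h : HL g τ) {u u' : ℝ → ℝ} (hu : ContDiffOn ℝ 1 u (Ioi 0))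
    (hu' : ∀ s, 0 < s → HasDerivAt u (u' s) s) (hpos : ∀ s, 0 < s → 0 ≤ u' s)
    {c d : ℝ} (hc : 0 ≤ c) (hcd : c ≤ d)
    (hd : 0 < PP g d) :
    ∫⁻ y in Ioc c d, ENNReal.ofReal (u' (PP g y) * (y * g y)) =
      ENNReal.ofReal (u (PP g c) - u (PP g d)) := by
  obtain ⟨h1, h2⟩ := h.ftc hu hu' hc hcd hd
  rw [← h2, intervalIntegral.integral_of_le hcd, ofReal_integral_eq_lintegral_ofReal]
  · exact (intervalIntegrable_iff_integrableOn_Ioc_of_le hcd).1 h1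
  · refine (ae_restrict_iff' measurableSet_Ioc).2 (Eventually.of_forall fun y hy => ?_)
    have : 0 < PP g y := lt_of_lt_of_le hd (h.P_anti (hc.trans hy.1.le) hy.2)
    exact mul_nonneg (hpos _ this) (mul_nonneg (hc.trans hy.1.le) (h.g0 y))

lemma sqrt_cd : ContDiffOn ℝ 1 (fun s : ℝ => 2 * √s) (Ioi 0) := by
  intro s hs
  exact (contDiffAt_const.mul (Real.contDiffAt_sqrt (ne_of_gt hs))).contDiffWithinAt

lemma sqrt_d (s : ℝ) (hs : 0 < s) : HasDerivAt (fun s : ℝ => 2 * √s) (1 / √s) s := by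
  have := (Real.hasDerivAt_sqrt hs.ne').const_mul 2
  refine this.congr_deriv ?_
  field_simp

lemma isqrt_cd : ContDiffOn ℝ 1 (fun s : ℝ => -(1 / √s)) (Ioi 0) := by
  intro s hs
  have : √s ≠ 0 := (Real.sqrt_pos.2 hs).ne'
  exact (contDiffAt_const.div (Real.contDiffAt_sqrt (ne_of_gt hs)) this).neg.contDiffWithinAt

lemma isqrt_d (s : ℝ) (hs : 0 < s) : HasDerivAt (fun s : ℝ => -(1 / √s)) (1 / 2 * (1 / (s * √s))) s := by
  have h0 : √s ≠ 0 := (Real.sqrt_pos.2 hs).ne'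
  have := ((Real.hasDerivAt_sqrt hs.ne').inv h0).neg
  have h2 : √s ^ 2 = s := Real.sq_sqrt hs.le
  refine (this.congr_deriv ?_).congr_of_eventuallyEq (Eventually.of_forall fun z => by simp)
  rw [h2]
  field_simp

lemma bnd_a (h : HL g τ) {c : ℝ} (hc : 0 ≤ c) :
    ∫⁻ y in Ioi c, ENNReal.ofReal (1 / √(PP g y) * (y * g y)) ≤ ENNReal.ofReal (2 * √(PP g c)) := by
  refine h.exhaust hc (Eventually.of_forall fun y _ h2 => by simp [h2]) fun d hd hP => ?_
  rw [h.lint_ftc sqrt_cd sqrt_d (fun s _ => by positivity) hc hd.le hP]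
  exact ENNReal.ofReal_le_ofReal (by have := Real.sqrt_nonneg (PP g d); linarith)

lemma bnd_b (h : HL g τ) {d : ℝ} (hd : 0 ≤ d) (hP : 0 < PP g d) :
    ∫⁻ y in Ioc 0 d, ENNReal.ofReal (1 / 2 * (1 / (PP g y * √(PP g y))) * (y * g y)) ≤
      ENNReal.ofReal (1 / √(PP g d)) := by
  rw [h.lint_ftc isqrt_cd isqrt_d (fun s _ => by positivity) le_rfl hd hP]
  refine ENNReal.ofReal_le_ofReal ?_
  have : 0 ≤ 1 / √(PP g 0) := by positivity
  linarith

lemma schur_pt {y t gy gt ey et p q : ℝ} (hy : 0 < y) (hyt : y < t) (h1 : 0 ≤ gy) (h2 : 0 ≤ gt)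
    (hp : 0 < p) (hq : 0 < q) :
    (y * gy / p * ey) * (et * gt) ≤ (1 / 2 * (ey ^ 2 * gy / √p)) * (1 / √q * (t * gt)) / √p * √p
      * (1 / √p * √p) + (1 / 2 * (1 / (p * √p)) * (y * gy)) * (et ^ 2 * gt * √q) := by
  obtain ⟨a, ha, rfl⟩ : ∃ a, 0 < a ∧ a ^ 2 = p := ⟨√p, by positivity, Real.sq_sqrt hp.le⟩
  obtain ⟨b, hb, rfl⟩ : ∃ a, 0 < a ∧ a ^ 2 = q := ⟨√q, by positivity, Real.sq_sqrt hq.le⟩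
  rw [Real.sqrt_sq ha.le, Real.sqrt_sq hb.le]
  have e1 : (1 / 2 * (ey ^ 2 * gy / a)) * (1 / b * (t * gt)) / a * a
      * (1 / a * a) = (1 / 2 * (ey ^ 2 * gy / a)) * (1 / b * (t * gt)) := by field_simp
  rw [e1]
  have e2 : (1 / 2 * (ey ^ 2 * gy / a)) * (1 / b * (y * gt)) ≤
      (1 / 2 * (ey ^ 2 * gy / a)) * (1 / b * (t * gt)) := by gcongr
  refine le_trans ?_ (add_le_add_left e2 _)
  have e3 : (1 / 2 * (ey ^ 2 * gy / a)) * (1 / b * (y * gt)) + (1 / 2 * (1 / (a^2 * a)) * (y * gy)) * (et ^ 2 * gt * b)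
      - (y * gy / a^2 * ey) * (et * gt) = y * gy * gt / (2 * a^3 * b) * (a * ey - b * et) ^ 2 := by
    field_simp; ring
  have : 0 ≤ y * gy * gt / (2 * a^3 * b) * (a * ey - b * et) ^ 2 := by positivity
  linarith

lemma schur_pt' {y t gy gt ey et p q : ℝ} (hy : 0 < y) (hyt : y < t) (h1 : 0 ≤ gy) (h2 : 0 ≤ gt)
    (hp : 0 < p) (hq : 0 < q) :
    (y * gy / p * ey) * (et * gt) ≤ (1 / 2 * (ey ^ 2 * gy / √p)) * (1 / √q * (t * gt))
      + (1 / 2 * (1 / (p * √p)) * (y * gy)) * (et ^ 2 * gt * √q) := by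
  have := schur_pt (ey := ey) (et := et) hy hyt h1 h2 hp hq
  have h3 : √p ≠ 0 := by positivity
  have e : (1 / 2 * (ey ^ 2 * gy / √p)) * (1 / √q * (t * gt)) / √p * √p
      * (1 / √p * √p) = (1 / 2 * (ey ^ 2 * gy / √p)) * (1 / √q * (t * gt)) := by field_simp
  rwa [e] at this

lemma schur (h : HL g τ) :
    ∫⁻ y in Ioi 0, ENNReal.ofReal (y * g y / PP g y * |1 - τ y|) *
      ∫⁻ t in Ioi y, ENNReal.ofReal (|1 - τ t| * g t) ≤
    2 * ∫⁻ y in Ioi 0, ENNReal.ofReal ((1 - τ y) ^ 2 * g y) := by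
  have hg := h.gm
  have ht := h.tm
  have hPm := h.P_cont.measurable
  set a1 : ℝ → ENNReal := fun y => ENNReal.ofReal (1 / 2 * (|1 - τ y| ^ 2 * g y / √(PP g y))) with ha1
  set b1 : ℝ → ENNReal := fun t => ENNReal.ofReal (1 / √(PP g t) * (t * g t)) with hb1
  set a2 : ℝ → ENNReal := fun y => ENNReal.ofReal (1 / 2 * (1 / (PP g y * √(PP g y))) * (y * g y)) with ha2
  set b2 : ℝ → ENNReal := fun t => ENNReal.ofReal (|1 - τ t| ^ 2 * g t * √(PP g t)) with hb2
  have ma1 : Measurable a1 := by fun_prop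
  have mb1 : Measurable b1 := by fun_prop
  have ma2 : Measurable a2 := by fun_prop
  have mb2 : Measurable b2 := by fun_prop
  have step : ∀ᵐ y, y ∈ Ioi (0:ℝ) → ENNReal.ofReal (y * g y / PP g y * |1 - τ y|) *
      ∫⁻ t in Ioi y, ENNReal.ofReal (|1 - τ t| * g t) ≤
      a1 y * (∫⁻ t in Ioi y, b1 t) + a2 y * ∫⁻ t in Ioi y, b2 t := by
    refine Eventually.of_forall fun y hy => ?_
    have hy : 0 < y := hy
    rcases (h.P_nonneg hy.le).eq_or_lt with hp | hp
    · simp [← hp]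
    rw [← lintegral_const_mul _ (by fun_prop), ← lintegral_const_mul _ mb1,
      ← lintegral_const_mul _ mb2, ← lintegral_add_left (by fun_prop)]
    refine lintegral_mono_ae ((ae_restrict_iff' measurableSet_Ioi).2 ?_)
    filter_upwards [h.P_pos] with t ht hyt
    have hyt : y < t := hyt
    by_cases hgt : g t = 0
    · simp [hgt]
    have hq := ht (hy.trans hyt) hgt
    have := schur_pt' (ey := |1 - τ y|) (et := |1 - τ t|) hy hyt (h.g0 y) (h.g0 t) hp hq
    have hgy := h.g0 y
    have hgt := h.g0 t
    simp only [ha1, hb1, ha2, hb2]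
    have ht0 : 0 < t := hy.trans hyt
    rw [← ENNReal.ofReal_mul (by positivity), ← ENNReal.ofReal_mul (by positivity),
      ← ENNReal.ofReal_mul (by positivity), ← ENNReal.ofReal_add (by positivity) (by positivity)]
    exact ENNReal.ofReal_le_ofReal this
  have s1 : ∫⁻ y in Ioi 0, a1 y * (∫⁻ t in Ioi y, b1 t) ≤
      ∫⁻ y in Ioi 0, ENNReal.ofReal ((1 - τ y) ^ 2 * g y) := by
    refine setLIntegral_mono' measurableSet_Ioi fun y hy => ?_
    have hy : 0 < y := hy
    refine (mul_le_mul_right (h.bnd_a hy.le) _).trans ?_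
    have hgy := h.g0 y
    simp only [ha1]
    rw [← ENNReal.ofReal_mul (by positivity)]
    refine ENNReal.ofReal_le_ofReal ?_
    rw [sq_abs]
    rcases (h.P_nonneg hy.le).eq_or_lt with hp | hp
    · rw [← hp]; simp; positivity
    · have : √(PP g y) ≠ 0 := by positivity
      apply le_of_eq; field_simp
  have s2 : ∫⁻ y in Ioi 0, a2 y * (∫⁻ t in Ioi y, b2 t) ≤
      ∫⁻ y in Ioi 0, ENNReal.ofReal ((1 - τ y) ^ 2 * g y) := by
    rw [lfub ma2 mb2]
    refine setLIntegral_mono' measurableSet_Ioi fun t ht0 => ?_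
    have ht0 : 0 < t := ht0
    rcases (h.P_nonneg ht0.le).eq_or_lt with hp | hp
    · simp [hb2, ← hp]
    have : ∫⁻ y in Ioo 0 t, a2 y ≤ ENNReal.ofReal (1 / √(PP g t)) :=
      (lintegral_mono_set Ioo_subset_Ioc_self).trans (h.bnd_b ht0.le hp)
    refine (mul_le_mul_right this _).trans ?_
    have hgt := h.g0 t
    simp only [hb2]
    rw [← ENNReal.ofReal_mul (by positivity)]
    refine ENNReal.ofReal_le_ofReal ?_
    rw [sq_abs]
    have : √(PP g t) ≠ 0 := by positivity
    apply le_of_eq; field_simp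
  have mI : ∀ b : ℝ → ENNReal, Measurable fun y => ∫⁻ t in Ioi y, b t := by
    intro b
    exact (Antitone.measurable fun x y hxy => lintegral_mono_set (Ioi_subset_Ioi hxy))
  calc _ ≤ ∫⁻ y in Ioi 0, (a1 y * (∫⁻ t in Ioi y, b1 t) + a2 y * ∫⁻ t in Ioi y, b2 t) :=
        lintegral_mono_ae ((ae_restrict_iff' measurableSet_Ioi).2 step)
    _ = (∫⁻ y in Ioi 0, a1 y * (∫⁻ t in Ioi y, b1 t)) + ∫⁻ y in Ioi 0, a2 y * ∫⁻ t in Ioi y, b2 t :=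
        lintegral_add_left (ma1.mul (mI b1)) _
    _ ≤ _ := by rw [two_mul]; exact add_le_add s1 s2

end HL


noncomputable def TT (y : ℝ) : ℝ := ∫ t in Ioi y, Real.exp (-(1/2) * t ^ 2)
noncomputable def rr (y : ℝ) : ℝ := Real.exp (1/2 * y ^ 2) * TT y

lemma gint : Integrable (fun t : ℝ => Real.exp (-(1/2) * t ^ 2)) :=
  integrable_exp_neg_mul_sq (by norm_num)

lemma TT_nonneg (y : ℝ) : 0 ≤ TT y := setIntegral_nonneg measurableSet_Ioi fun _ _ => (Real.exp_pos _).le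

lemma rr_nonneg (y : ℝ) : 0 ≤ rr y := mul_nonneg (Real.exp_pos _).le (TT_nonneg y)

lemma TT_deriv (y : ℝ) : HasDerivAt TT (-Real.exp (-(1/2) * y ^ 2)) y := by
  have hc : Continuous (fun t : ℝ => Real.exp (-(1/2) * t ^ 2)) := by fun_prop
  have h1 := intervalIntegral.integral_hasDerivAt_right (a := 0) (b := y)
    (gint.intervalIntegrable) (hc.stronglyMeasurableAtFilter _ _) hc.continuousAt
  have h2 := h1.const_sub (TT 0)
  refine h2.congr_of_eventuallyEq (Eventually.of_forall fun z => ?_)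
  have := intervalIntegral.integral_Ioi_sub_Ioi' (a := 0) (b := z) gint.integrableOn gint.integrableOn
  show TT z = TT 0 - _
  unfold TT
  linarith

lemma rr_deriv (y : ℝ) : HasDerivAt rr (y * rr y - 1) y := by
  have h1 : HasDerivAt (fun y : ℝ => Real.exp (1/2 * y ^ 2)) (Real.exp (1/2 * y^2) * y) y := by
    have : HasDerivAt (fun y : ℝ => 1/2 * y ^ 2) y y := by
      have := ((hasDerivAt_id y).pow 2).const_mul (1/2)
      refine this.congr_deriv ?_
      simp
    exact this.exp
  refine (h1.mul (TT_deriv y)).congr_deriv ?_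
  have : Real.exp (1/2 * y^2) * Real.exp (-(1/2) * y^2) = 1 := by
    rw [← Real.exp_add]; simp
  unfold rr
  linear_combination (-1) * this

lemma rr_cont : Continuous rr := continuous_iff_continuousAt.2 fun y => (rr_deriv y).continuousAt

lemma xexp_int (y : ℝ) : IntegrableOn (fun t : ℝ => t * Real.exp (-(1/2) * t ^ 2)) (Ioi y) ∧
    ∫ t in Ioi y, t * Real.exp (-(1/2) * t ^ 2) = Real.exp (-(1/2) * y ^ 2) := by
  have hi : Integrable (fun t : ℝ => t * Real.exp (-(1/2) * t ^ 2)) :=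
    integrable_mul_exp_neg_mul_sq (by norm_num)
  refine ⟨hi.integrableOn, ?_⟩
  have hd : ∀ x ∈ Ici y, HasDerivAt (fun t : ℝ => -Real.exp (-(1/2) * t ^ 2)) (x * Real.exp (-(1/2) * x^2)) x := by
    intro x _
    have : HasDerivAt (fun y : ℝ => -(1/2) * y ^ 2) (-x) x := by
      have := ((hasDerivAt_id x).pow 2).const_mul (-(1/2))
      refine this.congr_deriv ?_
      simp
    refine this.exp.neg.congr_deriv ?_
    ring
  have ht : Tendsto (fun t : ℝ => -Real.exp (-(1/2) * t ^ 2)) atTop (𝓝 (-0)) := by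
    refine Tendsto.neg (Real.tendsto_exp_atBot.comp ?_)
    exact (tendsto_pow_atTop (by norm_num)).const_mul_atTop_of_neg (by norm_num)
  have := integral_Ioi_of_hasDerivAt_of_tendsto' hd hi.integrableOn ht
  rw [this]; simp

lemma yTT_le (y : ℝ) : y * TT y ≤ Real.exp (-(1/2) * y^2) := by
  rw [← (xexp_int y).2]
  unfold TT
  rw [← integral_const_mul]
  refine setIntegral_mono_on (gint.const_mul y).integrableOn (xexp_int y).1 measurableSet_Ioi ?_
  intro t ht
  exact mul_le_mul_of_nonneg_right (le_of_lt ht) (Real.exp_pos _).le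

lemma yrr_le (y : ℝ) : y * rr y ≤ 1 := by
  have := yTT_le y
  have h1 : Real.exp (1/2 * y^2) * Real.exp (-(1/2) * y^2) = 1 := by
    rw [← Real.exp_add]; simp
  unfold rr
  have h2 := Real.exp_pos (1/2 * y^2)
  nlinarith

lemma rr_zero : rr 0 = √(2 * Real.pi) / 2 := by
  unfold rr TT
  rw [integral_gaussian_Ioi]
  have : Real.pi / (1/2) = 2 * Real.pi := by ring
  rw [this]
  simp

lemma gpdf (x : ℝ) : gaussianPDFReal 0 1 x = (√(2 * Real.pi))⁻¹ * Real.exp (-(1/2) * x ^ 2) := by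
  rw [gaussianPDFReal]
  simp
  left; ring

lemma int_rr (c t : ℝ) : ∫ y in c..t, (1 - y * rr y) = rr c - rr t := by
  have := intervalIntegral.integral_eq_sub_of_hasDerivAt (a := c) (b := t) (f := fun y => - rr y)
    (f' := fun y => 1 - y * rr y)
    (fun x _ => by refine (rr_deriv x).neg.congr_deriv ?_; ring)
    (by have := rr_cont; exact Continuous.intervalIntegrable (by fun_prop) _ _)
  rw [this]; ring

namespace HL
variable {g τ : ℝ → ℝ}

lemma tgi (h : HL g τ) : Integrable (fun x => τ x * g x) := by
  refine ((h.gi.const_mul 2).add h.ei).mono' (by have := h.gm; have := h.tm; fun_prop)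
    (Eventually.of_forall fun x => ?_)
  simp only [Pi.add_apply, norm_mul, Real.norm_eq_abs, abs_of_nonneg (h.g0 x)]
  have : |τ x| ≤ 2 + (1 - τ x) ^ 2 := by
    rcases abs_cases (τ x) with h | h <;> nlinarith [sq_nonneg (τ x)]
  nlinarith [h.g0 x]

lemma egi (h : HL g τ) : Integrable (fun x => |1 - τ x| * g x) := by
  have := (h.gi.sub h.tgi).norm
  refine this.congr (Eventually.of_forall fun x => ?_)
  simp only [Pi.sub_apply, Real.norm_eq_abs]
  have e : g x - τ x * g x = (1 - τ x) * g x := by ring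
  rw [e, abs_mul, abs_of_nonneg (h.g0 x)]

lemma Pint (h : HL g τ) : IntegrableOn (PP g) (Ioi 0) := by
  refine h.tgi.integrableOn.congr ?_
  refine (ae_restrict_iff' measurableSet_Ioi).2 ?_
  filter_upwards [h.tg] with x hx hx0 using hx hx0

lemma PI (h : HL g τ) {a : ℝ → ℝ} (ha : Continuous a) (hb : ∀ x, 0 ≤ x → |a x| ≤ 1) {c : ℝ}
    (hc : 0 ≤ c) :
    IntegrableOn (fun y => a y * PP g y) (Ioi c) ∧
    IntegrableOn (fun t => t * g t * ∫ y in c..t, a y) (Ioi c) ∧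
    ∫ y in Ioi c, a y * PP g y = ∫ t in Ioi c, t * g t * ∫ y in c..t, a y := by
  have h1 : IntegrableOn (fun y => a y * PP g y) (Ioi c) := by
    have hp := (h.Pint.mono_set (Ioi_subset_Ioi hc))
    refine Integrable.mono' hp.norm
      (by have := h.P_cont; exact (ha.mul this).aestronglyMeasurable) ?_
    refine (ae_restrict_iff' measurableSet_Ioi).2 (Eventually.of_forall fun x hx => ?_)
    rw [norm_mul, Real.norm_eq_abs, Real.norm_eq_abs]
    have := hb x (hc.trans (le_of_lt hx))
    nlinarith [abs_nonneg (PP g x)]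
  have hb : Measurable fun t => t * g t := by have := h.gm; fun_prop
  have := fub ha.measurable hb c h.g1 (by
    refine h1.congr_fun (fun y hy => ?_) measurableSet_Ioi
    simp only
    congr 1
    refine setIntegral_congr_fun measurableSet_Ioi fun t ht => ?_
    have : 0 < t := lt_of_le_of_lt hc (lt_trans hy ht)
    simp only [abs_of_nonneg (mul_nonneg this.le (h.g0 t))])
  exact ⟨h1, this⟩

lemma yrr_abs {x : ℝ} (hx : 0 ≤ x) : |x * rr x| ≤ 1 := by
  rw [abs_of_nonneg (mul_nonneg hx (rr_nonneg x))]; exact yrr_le x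

lemma one_yrr_abs {x : ℝ} (hx : 0 ≤ x) : |1 - x * rr x| ≤ 1 := by
  have := mul_nonneg hx (rr_nonneg x)
  have h2 := yrr_le x
  rw [abs_le]; constructor <;> linarith

lemma gRi (h : HL g τ) {c : ℝ} (hc : 0 ≤ c) : IntegrableOn (fun x => x * rr x * g x) (Ioi c) := by
  refine Integrable.mono' h.gi.integrableOn ((by have := h.gm; have := rr_cont; fun_prop :
    Measurable (fun x => x * rr x * g x)).aestronglyMeasurable) ?_
  refine (ae_restrict_iff' measurableSet_Ioi).2 (Eventually.of_forall fun x hx => ?_)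
  rw [norm_mul, Real.norm_eq_abs, Real.norm_eq_abs, abs_of_nonneg (h.g0 x)]
  have := yrr_abs (hc.trans (le_of_lt hx))
  nlinarith [h.g0 x]

lemma Vid (h : HL g τ) {y : ℝ} (hy : 0 ≤ y) :
    ∫ s in Ioi y, (1 - s * rr s) * (g s - PP g s) = GG g y - PP g y * rr y := by
  have hrc := rr_cont
  obtain ⟨h1, h2, h3⟩ := h.PI (a := fun s => 1 - s * rr s) (by fun_prop)
    (fun x hx => one_yrr_abs hx) hy
  simp_rw [int_rr] at h2 h3
  have hg := (h.gi.integrableOn (s := Ioi y))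
  have e1 : ∫ s in Ioi y, (1 - s * rr s) * (g s - PP g s) =
      ∫ s in Ioi y, ((g s - s * rr s * g s) - (1 - s * rr s) * PP g s) := by
    congr 1; funext s; ring
  have hgs : IntegrableOn (fun s => g s - s * rr s * g s) (Ioi y) := hg.sub (h.gRi hy)
  rw [e1, integral_sub hgs h1, integral_sub hg (h.gRi hy), h3]
  have e2 : ∫ t in Ioi y, t * g t * (rr y - rr t) = ∫ t in Ioi y, (rr y * (t * g t) - t * rr t * g t) := by
    congr 1; funext s; ring
  rw [e2, integral_sub (h.g1.integrableOn.const_mul _) (h.gRi hy), integral_const_mul]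
  unfold GG PP
  ring

lemma PRid (h : HL g τ) : IntegrableOn (fun y => (PP g y - g y) * (y * rr y)) (Ioi 0) ∧
    ∫ y in Ioi 0, (PP g y - g y) * (y * rr y) = (∫ y in Ioi 0, y ^ 2 * g y) - PP g 0 * rr 0 := by
  have hrc := rr_cont
  obtain ⟨h1, h2, h3⟩ := h.PI (a := fun s => s * rr s) (by fun_prop)
    (fun x hx => yrr_abs hx) le_rfl
  have hI : ∀ t : ℝ, ∫ y in (0:ℝ)..t, y * rr y = t - rr 0 + rr t := by
    intro t
    have e := int_rr 0 t
    rw [intervalIntegral.integral_sub (by simp) (Continuous.intervalIntegrable (by fun_prop) _ _)] at e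
    simp at e
    linarith
  simp_rw [hI] at h2 h3
  have e0 : (fun y => (PP g y - g y) * (y * rr y)) = fun y => y * rr y * PP g y - y * rr y * g y := by
    funext y; ring
  rw [e0]
  refine ⟨h1.sub (h.gRi le_rfl), ?_⟩
  rw [integral_sub h1 (h.gRi le_rfl), h3]
  have e2 : ∫ t in Ioi 0, t * g t * (t - rr 0 + rr t) =
      ∫ t in Ioi 0, ((t ^ 2 * g t - rr 0 * (t * g t)) + t * rr t * g t) := by
    congr 1; funext s; ring
  have hgs : IntegrableOn (fun t => t ^ 2 * g t - rr 0 * (t * g t)) (Ioi 0) :=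
    h.g2.integrableOn.sub (h.g1.integrableOn.const_mul _)
  rw [e2, integral_add hgs (h.gRi le_rfl),
    integral_sub h.g2.integrableOn (h.g1.integrableOn.const_mul _), integral_const_mul]
  unfold PP
  ring

end HL


namespace HL
variable {g τ : ℝ → ℝ}

noncomputable def dp (g τ : ℝ → ℝ) : ℝ := ∫ y in Ioi 0, (1 - τ y) ^ 2 * g y

lemma dp_nonneg (h : HL g τ) : 0 ≤ dp g τ :=
  setIntegral_nonneg measurableSet_Ioi fun y _ => mul_nonneg (sq_nonneg _) (h.g0 y)

lemma Pg (h : HL g τ) : ∀ᵐ y, 0 < y → |g y - PP g y| = |1 - τ y| * g y := by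
  filter_upwards [h.tg] with y hy hy0
  rw [← hy hy0]
  have e : g y - τ y * g y = (1 - τ y) * g y := by ring
  rw [e, abs_mul, abs_of_nonneg (h.g0 y)]

lemma V_le (h : HL g τ) {y : ℝ} (hy : 0 ≤ y) :
    |GG g y - PP g y * rr y| ≤ ∫ t in Ioi y, |1 - τ t| * g t := by
  rw [← h.Vid hy, ← Real.norm_eq_abs]
  refine norm_integral_le_of_norm_le h.egi.integrableOn ?_
  refine (ae_restrict_iff' measurableSet_Ioi).2 ?_
  filter_upwards [h.Pg] with t ht hyt
  have h0 : 0 < t := lt_of_le_of_lt hy hyt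
  rw [← ht h0, norm_mul, Real.norm_eq_abs, Real.norm_eq_abs]
  have := one_yrr_abs h0.le
  nlinarith [abs_nonneg (g t - PP g t)]

lemma Vterm (h : HL g τ) :
    IntegrableOn (fun y => (PP g y - g y) * (y / PP g y) * (GG g y - PP g y * rr y)) (Ioi 0) ∧
    ∫ y in Ioi 0, (PP g y - g y) * (y / PP g y) * (GG g y - PP g y * rr y) ≤ 2 * dp g τ := by
  set K : ℝ → ℝ := fun y => (PP g y - g y) * (y / PP g y) * (GG g y - PP g y * rr y) with hK
  have hm : Measurable K := by
    have := h.gm; have := h.P_cont.measurable; have := h.G_cont.measurable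
    have := rr_cont.measurable
    fun_prop
  have hb : ∫⁻ y in Ioi 0, ENNReal.ofReal |K y| ≤ 2 * ENNReal.ofReal (dp g τ) := by
    have e : ENNReal.ofReal (dp g τ) = ∫⁻ y in Ioi 0, ENNReal.ofReal ((1 - τ y) ^ 2 * g y) :=
      ofReal_integral_eq_lintegral_ofReal h.ei.integrableOn
        (Eventually.of_forall fun y => mul_nonneg (sq_nonneg _) (h.g0 y))
    rw [e]
    refine le_trans ?_ h.schur
    refine lintegral_mono_ae ((ae_restrict_iff' measurableSet_Ioi).2 ?_)
    filter_upwards [h.Pg] with y hy hy0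
    have hy0 : 0 < y := hy0
    have hV := h.V_le hy0.le
    have hP := h.P_nonneg hy0.le
    have hg := h.g0 y
    rw [← ofReal_integral_eq_lintegral_ofReal h.egi.integrableOn
      (Eventually.of_forall fun t => mul_nonneg (abs_nonneg _) (h.g0 t)),
      ← ENNReal.ofReal_mul (by positivity)]
    refine ENNReal.ofReal_le_ofReal ?_
    simp only [hK]
    rw [abs_mul, abs_mul, abs_sub_comm (PP g y), hy hy0, abs_of_nonneg (by positivity : 0 ≤ y / PP g y)]
    have e2 : |1 - τ y| * g y * (y / PP g y) = y * g y / PP g y * |1 - τ y| := by ring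
    rw [e2]
    gcongr
  have hi : IntegrableOn K (Ioi 0) := by
    refine ⟨hm.aestronglyMeasurable, ?_⟩
    rw [hasFiniteIntegral_iff_norm]
    simp only [Real.norm_eq_abs]
    exact hb.trans_lt (ENNReal.mul_lt_top (by simp) ENNReal.ofReal_lt_top)
  refine ⟨hi, ?_⟩
  calc ∫ y in Ioi 0, K y ≤ ∫ y in Ioi 0, |K y| :=
        integral_mono hi hi.abs fun y => le_abs_self _
    _ = (∫⁻ y in Ioi 0, ENNReal.ofReal |K y|).toReal :=
        integral_eq_lintegral_of_nonneg_ae (Eventually.of_forall fun _ => abs_nonneg _)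
          hi.abs.aestronglyMeasurable
    _ ≤ (2 * ENNReal.ofReal (dp g τ)).toReal :=
        ENNReal.toReal_mono (ENNReal.mul_ne_top (by simp) ENNReal.ofReal_ne_top) hb
    _ = 2 * dp g τ := by simp [ENNReal.toReal_ofReal h.dp_nonneg]

lemma log_cd : ContDiffOn ℝ 1 Real.log (Ioi 0) := fun s hs =>
  (Real.contDiffAt_log.2 (ne_of_gt hs)).contDiffWithinAt

lemma log_d (s : ℝ) (hs : 0 < s) : HasDerivAt Real.log (1 / s) s := by
  rw [one_div]; exact Real.hasDerivAt_log hs.ne'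

lemma logP (h : HL g τ) {x : ℝ} (hx : 0 < x) (hP : 0 < PP g x) :
    Real.log (PP g x / gaussianPDFReal 0 1 x) = Real.log (PP g 0 * √(2 * Real.pi)) +
      ∫ y in (0:ℝ)..x, y * (1 - g y / PP g y) := by
  obtain ⟨h1, h2⟩ := h.ftc log_cd log_d le_rfl hx.le hP
  have e : ∫ y in (0:ℝ)..x, y * (1 - g y / PP g y) =
      ∫ y in (0:ℝ)..x, (y - 1 / PP g y * (y * g y)) := by
    congr 1; funext y; ring
  rw [e, intervalIntegral.integral_sub (by simp) h1, h2, gpdf]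
  have hpi : 0 < √(2 * Real.pi) := by positivity
  have hp0 := h.p0
  rw [Real.log_div hP.ne' (by positivity), Real.log_mul (by positivity) (Real.exp_pos _).ne',
    Real.log_mul hp0.ne' hpi.ne', Real.log_exp, Real.log_inv]
  simp
  ring

lemma G_zero (h : HL g τ) {y : ℝ} (hy : 0 < y) (hP : PP g y = 0) : GG g y = 0 := by
  have := h.xG_le y
  have h2 := h.G_nonneg y
  rw [hP] at this
  nlinarith

lemma H1 (h : HL g τ) :
    IntegrableOn (fun x => g x * Real.log (PP g x / gaussianPDFReal 0 1 x)) (Ioi 0) ∧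
    ∫ x in Ioi 0, g x * Real.log (PP g x / gaussianPDFReal 0 1 x) ≤
      GG g 0 * Real.log (PP g 0 * √(2 * Real.pi)) + (∫ y in Ioi 0, y ^ 2 * g y)
        - PP g 0 * (√(2 * Real.pi) / 2) + 2 * dp g τ := by
  have hgm := h.gm
  have hPm := h.P_cont.measurable
  have hGm := h.G_cont.measurable
  have ha : Measurable fun y => y * (1 - g y / PP g y) := by fun_prop
  have hGabs : ∀ y, ∫ t in Ioi y, |g t| = GG g y := by
    intro y; unfold GG; congr 1; funext t; exact abs_of_nonneg (h.g0 t)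
  have hi : IntegrableOn (fun y => y * (1 - g y / PP g y) * GG g y) (Ioi 0) := by
    refine Integrable.mono' (h.Pint.add h.gi.integrableOn) (by fun_prop) ?_
    refine (ae_restrict_iff' measurableSet_Ioi).2 (Eventually.of_forall fun y hy => ?_)
    have hy : 0 < y := hy
    have hP := h.P_nonneg hy.le
    have hg := h.g0 y
    simp only [Pi.add_apply]
    rcases hP.eq_or_lt with hp | hp
    · rw [h.G_zero hy hp.symm, ← hp]; simp [hg]
    · have e : y * (1 - g y / PP g y) * GG g y = (1 - g y / PP g y) * (y * GG g y) := by ring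
      rw [e, norm_mul, Real.norm_eq_abs, Real.norm_eq_abs,
        abs_of_nonneg (mul_nonneg hy.le (h.G_nonneg y))]
      have h3 : |1 - g y / PP g y| ≤ 1 + g y / PP g y := by
        have : 0 ≤ g y / PP g y := by positivity
        rw [abs_le]; constructor <;> linarith
      calc _ ≤ (1 + g y / PP g y) * PP g y := by
            gcongr
            · exact mul_nonneg hy.le (h.G_nonneg y)
            · exact h.xG_le y
        _ = _ := by field_simp
  obtain ⟨f1, f2⟩ := fub ha h.gm 0 h.gi (by simp_rw [hGabs]; exact hi)
  have hcon := (h.gi.integrableOn (s := Ioi 0)).mul_const (Real.log (PP g 0 * √(2 * Real.pi)))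
  have hae : (fun x => g x * Real.log (PP g x / gaussianPDFReal 0 1 x)) =ᵐ[volume.restrict (Ioi 0)]
      (fun x => g x * Real.log (PP g 0 * √(2 * Real.pi)) +
        g x * ∫ y in (0:ℝ)..x, y * (1 - g y / PP g y)) := by
    refine (ae_restrict_iff' measurableSet_Ioi).2 ?_
    filter_upwards [h.P_pos] with x hx hx0
    by_cases hg : g x = 0
    · simp [hg]
    · rw [h.logP hx0 (hx hx0 hg)]; ring
  refine ⟨(hcon.add f1).congr hae.symm, ?_⟩
  rw [integral_congr_ae hae, integral_add hcon f1, ← f2, integral_mul_const]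
  have hae2 : (fun y => y * (1 - g y / PP g y) * ∫ t in Ioi y, g t) =ᵐ[volume.restrict (Ioi 0)]
      (fun y => (PP g y - g y) * (y * rr y) + (PP g y - g y) * (y / PP g y) * (GG g y - PP g y * rr y)) := by
    refine (ae_restrict_iff' measurableSet_Ioi).2 ?_
    filter_upwards [h.P_pos] with y hy hy0
    have hy0 : 0 < y := hy0
    show y * (1 - g y / PP g y) * GG g y = _
    rcases (h.P_nonneg hy0.le).eq_or_lt with hp | hp
    · have hg : g y = 0 := by
        by_contra hg
        have := hy hy0 hg
        linarith
      rw [h.G_zero hy0 hp.symm, ← hp, hg]; simp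
    · field_simp
      ring
  rw [integral_congr_ae hae2, integral_add h.PRid.1 h.Vterm.1, h.PRid.2, rr_zero]
  have := h.Vterm.2
  unfold GG at *
  linarith

end HL


namespace HL
variable {g τ : ℝ → ℝ}

lemma inv_cd : ContDiffOn ℝ 1 (fun s : ℝ => -(1/s)) (Ioi 0) := by
  intro s hs
  exact (contDiffAt_const.div contDiffAt_id (ne_of_gt hs)).neg.contDiffWithinAt

lemma inv_d (s : ℝ) (hs : 0 < s) : HasDerivAt (fun s : ℝ => -(1/s)) (1 / s ^ 2) s := by
  have := (hasDerivAt_inv hs.ne').neg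
  refine (this.congr_deriv ?_).congr_of_eventuallyEq (Eventually.of_forall fun z => by simp)
  simp

lemma H2a (h : HL g τ) {b lam : ℝ} (hb : 0 < b) (hPb : PP g b = 0) (hl : 0 < lam)
    (hlp : lam ≤ PP g 0) :
    Real.log (PP g 0 / lam) - 1/2 * (b * dp g τ) / lam - 1/2 ≤ b ^ 2 / 2 := by
  obtain ⟨y, ⟨hy0, hyb⟩, hPy⟩ := intermediate_value_Icc' hb.le h.P_cont.continuousOn
    (show lam ∈ Icc (PP g b) (PP g 0) from ⟨by rw [hPb]; exact hl.le, hlp⟩)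
  have hP : 0 < PP g y := by rw [hPy]; exact hl
  obtain ⟨h1, h2⟩ := h.ftc log_cd log_d le_rfl hy0 hP
  obtain ⟨h3, h4⟩ := h.ftc inv_cd inv_d le_rfl hy0 hP
  have hE : IntervalIntegrable (fun s => (1 - τ s) ^ 2 * g s) volume 0 y := h.ei.intervalIntegrable
  have hmain : ∫ s in (0:ℝ)..y, (1 / PP g s * (s * g s) - 1/2 * b / lam * ((1 - τ s) ^ 2 * g s)
      - 1/2 * lam * (1 / PP g s ^ 2 * (s * g s))) ≤ ∫ s in (0:ℝ)..y, s := by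
    refine intervalIntegral.integral_mono_ae_restrict hy0
      ((h1.sub (hE.const_mul _)).sub (h3.const_mul _)) (by simp) ?_
    refine (ae_restrict_iff' measurableSet_Icc).2 ?_
    filter_upwards [h.tg, Measure.ae_ne volume (0:ℝ)] with s hs hs1 hs2
    have hs0 : 0 < s := lt_of_le_of_ne hs2.1 (Ne.symm hs1)
    have hPs : 0 < PP g s := lt_of_lt_of_le hP (h.P_anti hs2.1 hs2.2)
    have e := hs hs0
    have hg := h.g0 s
    set p := PP g s
    have hsb : s ≤ b := hs2.2.trans hyb
    have key : (1 - τ s) / p ≤ 1/2 * ((1 - τ s)^2 / lam + lam / p ^ 2) := by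
      have : 1/2 * ((1 - τ s)^2 / lam + lam / p ^ 2) - (1 - τ s) / p
        = 1 / (2 * lam * p ^ 2) * ((1 - τ s) * p - lam) ^ 2 := by field_simp; ring
      have : 0 ≤ 1 / (2 * lam * p ^ 2) * ((1 - τ s) * p - lam) ^ 2 := by positivity
      linarith
    have e1 : s = s * (τ s * g s) / p := by rw [e]; field_simp
    have e2 : (1 - τ s) / p * (s * g s) ≤ 1/2 * ((1 - τ s)^2 / lam + lam / p ^ 2) * (s * g s) := by
      gcongr
    have e3 : s * ((1 - τ s)^2 * g s / lam) ≤ b * ((1 - τ s)^2 * g s / lam) := by gcongr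
    have e4 : (1 - τ s) / p * (s * g s) = 1 / p * (s * g s) - s * (τ s * g s) / p := by ring
    rw [e4, ← e1] at e2
    have e5 : 1/2 * ((1 - τ s)^2 / lam + lam / p ^ 2) * (s * g s) =
      1/2 * (s * ((1 - τ s)^2 * g s / lam)) + 1/2 * lam * (1 / p ^ 2 * (s * g s)) := by ring
    have e6 : 1/2 * b / lam * ((1 - τ s) ^ 2 * g s) = 1/2 * (b * ((1 - τ s)^2 * g s / lam)) := by ring
    rw [e6]
    linarith
  have hdp : ∫ s in (0:ℝ)..y, (1 - τ s) ^ 2 * g s ≤ dp g τ := by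
    rw [intervalIntegral.integral_of_le hy0]
    exact setIntegral_mono_set h.ei.integrableOn
      (Eventually.of_forall fun s => mul_nonneg (sq_nonneg _) (h.g0 s))
      (Eventually.of_forall fun s hs => hs.1)
  rw [intervalIntegral.integral_sub (h1.sub (hE.const_mul _)) (h3.const_mul _),
    intervalIntegral.integral_sub h1 (hE.const_mul _), intervalIntegral.integral_const_mul,
    intervalIntegral.integral_const_mul, h2, h4, integral_id, hPy] at hmain
  rw [Real.log_div h.p0.ne' hl.ne']
  have f1 : 1/2 * lam * (-(1 / PP g 0) - -(1 / lam)) ≤ 1/2 := by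
    have : 0 ≤ 1/2 * lam * (1 / PP g 0) := by have := h.p0; positivity
    have e : 1/2 * lam * (1 / lam) = 1/2 := by field_simp
    nlinarith
  have f2 : 1/2 * b / lam * ∫ s in (0:ℝ)..y, (1 - τ s) ^ 2 * g s ≤ 1/2 * b / lam * dp g τ := by
    gcongr
  have f3 : 1/2 * b / lam * dp g τ = 1/2 * (b * dp g τ) / lam := by ring
  have f4 : y ^ 2 ≤ b ^ 2 := by gcongr
  rw [f3] at f2
  linarith

lemma H2b (h : HL g τ) {b : ℝ} (hb : 0 < b) (hPb : PP g b = 0) :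
    TT b ≤ Real.exp 1 * dp g τ / PP g 0 := by
  have hd := h.dp_nonneg
  have hp := h.p0
  have hT := yTT_le b
  rcases hd.eq_or_lt with h0 | h0
  · exfalso
    have := h.H2a hb hPb (lam := PP g 0 * Real.exp (-(b^2/2 + 1))) (by positivity) (by
      have : Real.exp (-(b^2/2 + 1)) ≤ 1 := Real.exp_le_one_iff.2 (by nlinarith [sq_nonneg b])
      nlinarith)
    rw [← h0] at this
    have e : PP g 0 / (PP g 0 * Real.exp (-(b^2/2 + 1))) = Real.exp (b^2/2+1) := by
      rw [Real.exp_neg]; field_simp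
    rw [e, Real.log_exp] at this
    simp at this
    linarith
  rcases le_or_gt (b * dp g τ) (PP g 0) with h1 | h1
  · have := h.H2a hb hPb (lam := b * dp g τ) (by positivity) h1
    have e : 1/2 * (b * dp g τ) / (b * dp g τ) = 1/2 := by field_simp
    rw [e] at this
    have h2 : PP g 0 / (b * dp g τ) ≤ Real.exp (b^2/2 + 1) := by
      rw [← Real.log_le_iff_le_exp (by positivity)]; linarith
    rw [Real.exp_add, div_le_iff₀ (by positivity)] at h2
    rw [le_div_iff₀ hp]
    have e3 : Real.exp (b^2/2) * Real.exp (-(1/2) * b^2) = 1 := by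
      rw [← Real.exp_add, Real.exp_eq_one_iff]; ring
    have h5 := Real.exp_pos (b^2/2)
    have h6 : b * TT b * PP g 0 ≤ Real.exp (-(1/2) * b^2) * (Real.exp (b^2/2) * Real.exp 1 * (b * dp g τ)) := by
      gcongr
    have h7 : Real.exp (-(1/2) * b^2) * (Real.exp (b^2/2) * Real.exp 1 * (b * dp g τ)) = b * (Real.exp 1 * dp g τ) := by
      linear_combination (Real.exp 1 * (b * dp g τ)) * e3
    rw [h7, mul_assoc] at h6
    exact le_of_mul_le_mul_left h6 hb
  · rw [le_div_iff₀ hp]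
    have h2 : Real.exp (-(1/2) * b^2) ≤ 1 := Real.exp_le_one_iff.2 (by nlinarith [sq_nonneg b])
    have h3 : 1 ≤ Real.exp 1 := Real.one_le_exp (by norm_num)
    have hTn := TT_nonneg b
    have : b * (TT b * PP g 0) ≤ b * (Real.exp 1 * dp g τ) := by
      calc b * (TT b * PP g 0) = b * TT b * PP g 0 := by ring
        _ ≤ 1 * (b * dp g τ) := by gcongr; linarith
        _ ≤ Real.exp 1 * (b * dp g τ) := by gcongr
        _ = _ := by ring
    exact le_of_mul_le_mul_left this hb

lemma H2 (h : HL g τ) :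
    ∫ x in Ioi 0, {x | g x = 0}.indicator (gaussianPDFReal 0 1) x ≤
      Real.exp 1 * (dp g τ / (√(2 * Real.pi) * PP g 0)) := by
  have hd := h.dp_nonneg
  have hp := h.p0
  have hgz : ∀ᵐ x, 0 < x → g x = 0 → PP g x = 0 := by
    filter_upwards [h.tg] with x hx h0 h1
    rw [← hx h0, h1, mul_zero]
  by_cases hb : ∃ b, 0 ≤ b ∧ PP g b = 0
  · set S := {b | 0 ≤ b ∧ PP g b = 0}
    have hS : S.Nonempty := hb
    have hbd : BddBelow S := ⟨0, fun b hb => hb.1⟩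
    have hcl : IsClosed S := (isClosed_le continuous_const continuous_id).inter
      (isClosed_eq h.P_cont continuous_const)
    have hmem : sInf S ∈ S := hcl.csInf_mem hS hbd
    set b := sInf S
    have hb0 : 0 < b := by
      refine lt_of_le_of_ne hmem.1 fun h0 => ?_
      have := hmem.2
      rw [← h0] at this
      linarith
    have e : ∫ x in Ioi 0, {x | g x = 0}.indicator (gaussianPDFReal 0 1) x ≤
        ∫ x in Ioi 0, (Ioi b).indicator (gaussianPDFReal 0 1) x := by
      refine integral_mono_of_nonneg
        (Eventually.of_forall fun x => indicator_nonneg (fun _ _ => gaussianPDFReal_nonneg _ _ _) _)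
        ((integrable_gaussianPDFReal 0 1).indicator measurableSet_Ioi).integrableOn ?_
      refine (ae_restrict_iff' measurableSet_Ioi).2 ?_
      filter_upwards [hgz, Measure.ae_ne volume b] with x hx hxb hx0
      by_cases h1 : g x = 0
      · have h2 : b ≤ x := csInf_le hbd ⟨le_of_lt hx0, hx hx0 h1⟩
        have h3 : b < x := lt_of_le_of_ne h2 (Ne.symm hxb)
        simp [indicator, h1, h3]
      · simp only [indicator, mem_ofPred_eq, h1, if_false]
        split_ifs
        · exact gaussianPDFReal_nonneg _ _ _
        · exact le_rfl
    refine e.trans ?_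
    rw [setIntegral_indicator measurableSet_Ioi]
    have e2 : Ioi 0 ∩ Ioi b = Ioi b := by
      rw [inter_eq_right]; exact Ioi_subset_Ioi hb0.le
    rw [e2]
    simp_rw [gpdf]
    rw [integral_const_mul]
    have := h.H2b hb0 hmem.2
    have h3 : (√(2 * Real.pi))⁻¹ * TT b ≤ (√(2 * Real.pi))⁻¹ * (Real.exp 1 * dp g τ / PP g 0) := by gcongr
    refine h3.trans (le_of_eq ?_)
    have : √(2 * Real.pi) ≠ 0 := by positivity
    field_simp
  · push Not at hb
    have : ∫ x in Ioi 0, {x | g x = 0}.indicator (gaussianPDFReal 0 1) x = 0 := by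
      refine integral_eq_zero_of_ae ((ae_restrict_iff' measurableSet_Ioi).2 ?_)
      filter_upwards [hgz] with x hx hx0
      have : g x ≠ 0 := fun h1 => hb x (le_of_lt hx0) (hx hx0 h1)
      simp [indicator, this]
    rw [this]
    positivity

end HL


def TVB (g : ℝ → ℝ) (κ α : ℝ) : Prop :=
  ∀ x : ℝ, ∀ t ∈ Ioc (0:ℝ) 1, ∀ A : Set ℝ, MeasurableSet A →
    ∫⁻ y in A, ENNReal.ofReal (g y) ≤
      (∫⁻ y, A.indicator 1 (√t * y + √(1 - t) * x) * ENNReal.ofReal (g y)) +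
        ENNReal.ofReal (κ * (1 + |x|) * t⁻¹ * (1 - t) ^ α)

lemma lint_sub (H : ℝ → ENNReal) (hH : Measurable H) (c : ℝ) {w : ℝ} (hw : 0 < w) :
    ∫⁻ u, H (c - w * u) = ENNReal.ofReal (1 / w) * ∫⁻ a, H a := by
  have h1 : ∫⁻ u, H (c - u) = ∫⁻ a, H a := lintegral_sub_left_eq_self H c
  have h2 := Real.smul_map_volume_mul_left hw.ne'
  rw [← h1]
  conv_rhs => rw [← h2]
  rw [lintegral_smul_measure, lintegral_map (by fun_prop) (by fun_prop), smul_eq_mul, ← mul_assoc,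
    ← ENNReal.ofReal_mul (by positivity), abs_of_pos hw]
  have : 1 / w * w = 1 := by field_simp
  rw [this]; simp

namespace HL
variable {g τ : ℝ → ℝ}

lemma H3a (h : HL g τ) {κ α : ℝ} (hκ : 0 < κ) (hB : TVB g κ α) (hG : GG g 0 ≤ 1)
    (hp : 2 / 11 ≤ PP g 0) {v w : ℝ} (hv : 0 < v) (hw : w = 11 * v) (hw1 : w < 1)
    {A : Set ℝ} (hA : MeasurableSet A) (hAv : ∀ y ∈ A, 0 < y ∧ PP g y ≤ v * g y) :
    ∫⁻ y in A, ENNReal.ofReal (g y) ≤ ENNReal.ofReal (3 * κ * (1 - w^2)⁻¹ * (w^2) ^ α) := by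
  have hw0 : 0 < w := by rw [hw]; positivity
  set t := 1 - w ^ 2 with ht
  have ht0 : 0 < t := by rw [ht]; nlinarith
  have ht1 : t ≤ 1 := by rw [ht]; nlinarith [sq_nonneg w]
  have hst : √(1 - t) = w := by
    rw [ht, show 1 - (1 - w^2) = w^2 by ring, Real.sqrt_sq hw0.le]
  set c := t⁻¹ * (w^2) ^ α with hc
  have hc0 : 0 ≤ c := by positivity
  set m := ∫⁻ y in A, ENNReal.ofReal (g y) with hm
  have hgm := h.gm
  have hmfin : m ≠ ⊤ := by
    have : m ≤ ∫⁻ y, ENNReal.ofReal (g y) := setLIntegral_le_lintegral _ _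
    exact ne_top_of_le_ne_top h.gi.lintegral_lt_top.ne this
  have hpt : ∀ u ∈ Ioo (0:ℝ) 1, m ≤
      (∫⁻ y, A.indicator 1 (√t * y - w * u) * ENNReal.ofReal (g y)) +
        ENNReal.ofReal (κ * c * (1 + u)) := by
    intro u hu
    have := hB (-u) t ⟨ht0, ht1⟩ A hA
    rw [hst, abs_neg, abs_of_pos hu.1] at this
    refine this.trans (le_of_eq ?_)
    have e1 : ∀ y, √t * y + w * -u = √t * y - w * u := fun y => by ring
    simp_rw [e1]
    congr 2
    rw [hc, ht, show 1 - (1 - w^2) = w^2 by ring]; ring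
  have hind : Measurable (A.indicator (1 : ℝ → ENNReal)) := measurable_one.indicator hA
  have havg : m ≤ (∫⁻ u in Ioo (0:ℝ) 1, ∫⁻ y, A.indicator 1 (√t * y - w * u) * ENNReal.ofReal (g y)) +
      ∫⁻ u in Ioo (0:ℝ) 1, ENNReal.ofReal (κ * c * (1 + u)) := by
    have e : m = ∫⁻ u in Ioo (0:ℝ) 1, m := by simp
    rw [← lintegral_add_right _ (by fun_prop)]
    conv_lhs => rw [e]
    exact setLIntegral_mono' measurableSet_Ioo hpt
  have hsec : ∫⁻ u in Ioo (0:ℝ) 1, ENNReal.ofReal (κ * c * (1 + u)) = ENNReal.ofReal (3/2 * κ * c) := by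
    rw [restrict_Ioo_eq_restrict_Ioc, ← ofReal_integral_eq_lintegral_ofReal]
    · rw [← intervalIntegral.integral_of_le zero_le_one, intervalIntegral.integral_const_mul,
        intervalIntegral.integral_add (by simp) (by simp)]
      simp
      congr 1
      ring
    · exact (Continuous.integrableOn_Icc (by fun_prop)).mono_set Ioc_subset_Icc_self
    · refine (ae_restrict_iff' measurableSet_Ioc).2 (Eventually.of_forall fun u hu => ?_)
      have := hu.1
      show 0 ≤ κ * c * (1 + u)
      positivity
  have hfirst : (∫⁻ u in Ioo (0:ℝ) 1, ∫⁻ y, A.indicator 1 (√t * y - w * u) * ENNReal.ofReal (g y)) ≤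
      ENNReal.ofReal (1/2) * m := by
    have hmeas2 : Measurable (Function.uncurry fun (u y : ℝ) =>
        A.indicator (1 : ℝ → ENNReal) (√t * y - w * u) * ENNReal.ofReal (g y)) := by
      unfold Function.uncurry
      exact (hind.comp (by fun_prop)).mul (by fun_prop)
    rw [lintegral_lintegral_swap hmeas2.aemeasurable]
    have st : √t ≤ 1 := Real.sqrt_le_one.2 ht1
    have hin : ∀ y, ∫⁻ u in Ioo (0:ℝ) 1, A.indicator 1 (√t * y - w * u) * ENNReal.ofReal (g y) ≤
        ENNReal.ofReal (g y) * (ENNReal.ofReal (1/w) * ∫⁻ a, (A ∩ Iio y).indicator 1 a) := by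
      intro y
      have hmm : Measurable fun u => A.indicator (1 : ℝ → ENNReal) (√t * y - w * u) :=
        hind.comp (by fun_prop)
      rw [lintegral_mul_const _ hmm, mul_comm]
      gcongr
      rw [← lint_sub _ (measurable_one.indicator (hA.inter measurableSet_Iio)) (√t * y) hw0]
      rw [← lintegral_indicator measurableSet_Ioo]
      refine lintegral_mono fun u => ?_
      by_cases hu : u ∈ Ioo (0:ℝ) 1
      · rw [indicator_of_mem hu]
        by_cases ha : √t * y - w * u ∈ A
        · have h0 := (hAv _ ha).1
          have h1 : 0 < w * u := mul_pos hw0 hu.1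
          have h2 : 0 < y := by
            by_contra hy
            have : √t * y ≤ 0 := mul_nonpos_of_nonneg_of_nonpos (Real.sqrt_nonneg _) (not_lt.1 hy)
            linarith
          have h3 : √t * y - w * u < y := by nlinarith
          have : √t * y - w * u ∈ A ∩ Iio y := ⟨ha, h3⟩
          rw [indicator_of_mem ha, indicator_of_mem this]
        · rw [indicator_of_notMem ha]; simp
      · rw [indicator_of_notMem hu]; simp
    refine (lintegral_mono hin).trans ?_
    have e1 : ∫⁻ y, ENNReal.ofReal (g y) * (ENNReal.ofReal (1/w) * ∫⁻ a, (A ∩ Iio y).indicator 1 a) =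
        ENNReal.ofReal (1/w) * ∫⁻ y, ∫⁻ a, A.indicator (fun a => (Ioi a).indicator (fun y => ENNReal.ofReal (g y)) y) a := by
      rw [← lintegral_const_mul' _ _ ENNReal.ofReal_ne_top]
      refine lintegral_congr fun y => ?_
      rw [mul_left_comm, ← lintegral_const_mul' _ _ ENNReal.ofReal_ne_top]
      congr 1
      refine lintegral_congr fun a => ?_
      by_cases ha : a ∈ A <;> by_cases hay : a < y <;> simp [indicator, ha, hay]
    rw [e1]
    have hm3 : Measurable (Function.uncurry fun (y a : ℝ) =>
        A.indicator (fun a => (Ioi a).indicator (fun y => ENNReal.ofReal (g y)) y) a) := by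
      have : (Function.uncurry fun (y a : ℝ) =>
        A.indicator (fun a => (Ioi a).indicator (fun y => ENNReal.ofReal (g y)) y) a) =
        ({q : ℝ × ℝ | q.2 ∈ A ∧ q.2 < q.1}).indicator (fun q => ENNReal.ofReal (g q.1)) := by
        funext q
        by_cases ha : q.2 ∈ A <;> by_cases hay : q.2 < q.1 <;>
          simp [Function.uncurry, indicator, ha, hay]
      rw [this]
      exact Measurable.indicator (by fun_prop)
        ((measurable_snd hA).inter (measurableSet_lt measurable_snd measurable_fst))
    rw [lintegral_lintegral_swap hm3.aemeasurable]
    have e2 : ∀ a, ∫⁻ y, A.indicator (fun a => (Ioi a).indicator (fun y => ENNReal.ofReal (g y)) y) a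
        = A.indicator (fun a => ENNReal.ofReal (GG g a)) a := by
      intro a
      by_cases ha : a ∈ A
      · simp only [indicator_of_mem ha]
        rw [lintegral_indicator measurableSet_Ioi, GG, ofReal_integral_eq_lintegral_ofReal
          h.gi.integrableOn (Eventually.of_forall h.g0)]
      · simp only [indicator_of_notMem ha]; simp
    simp_rw [e2]
    rw [lintegral_indicator hA]
    have hp0 := h.p0
    have e3 : ∫⁻ a in A, ENNReal.ofReal (GG g a) ≤ ∫⁻ a in A, ENNReal.ofReal (v / PP g 0) * ENNReal.ofReal (g a) := by
      refine setLIntegral_mono' hA fun a ha => ?_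
      rw [← ENNReal.ofReal_mul (by positivity)]
      refine ENNReal.ofReal_le_ofReal ?_
      have h1 := h.PG_le (hAv a ha).1.le
      have h2 := h.P_nonneg (hAv a ha).1.le
      have h3 : PP g a * GG g 0 ≤ PP g a := by nlinarith
      have h4 := (hAv a ha).2
      rw [div_mul_eq_mul_div, le_div_iff₀ hp0]
      linarith
    calc _ ≤ ENNReal.ofReal (1/w) * (ENNReal.ofReal (v / PP g 0) * m) := by
          gcongr
          rw [hm, ← lintegral_const_mul' _ _ ENNReal.ofReal_ne_top]
          exact e3
      _ = ENNReal.ofReal (1/w * (v / PP g 0)) * m := by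
          rw [← mul_assoc, ← ENNReal.ofReal_mul (by positivity)]
      _ ≤ _ := by
          gcongr
          rw [hw]
          have : 1 / (11 * v) * (v / PP g 0) = 1 / (11 * PP g 0) := by field_simp
          rw [this, div_le_div_iff₀ (by positivity) (by norm_num)]
          linarith
  rw [hsec] at havg
  have hfin := havg.trans (add_le_add_left hfirst _)
  rw [← ENNReal.ofReal_toReal hmfin, ← ENNReal.ofReal_mul (by norm_num), ← ENNReal.ofReal_add (by positivity)
    (by positivity), ENNReal.ofReal_le_ofReal_iff (by positivity)] at hfin
  rw [← ENNReal.ofReal_toReal hmfin]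
  refine ENNReal.ofReal_le_ofReal ?_
  have : 3 * κ * t⁻¹ * (w^2) ^ α = 3 * κ * c := by rw [hc]; ring
  rw [this]
  linarith

lemma H3 (h : HL g τ) {κ α : ℝ} (hκ : 0 < κ) (hα : 0 < α) (hB : TVB g κ α) (hG : GG g 0 ≤ 1)
    (hp : 2 / 11 ≤ PP g 0) {v : ℝ} (hv : 0 < v) (hv1 : v ≤ 1/13) :
    ∫⁻ y in Ioi 0, {y | τ y < v}.indicator (fun y => ENNReal.ofReal (g y)) y ≤
      ENNReal.ofReal (233 / 2 * κ * v ^ (min 1 (2 * α))) := by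
  set A := {y | 0 < y ∧ PP g y ≤ v * g y} with hA
  have hAm : MeasurableSet A :=
    (measurableSet_lt measurable_const measurable_id).inter
      (measurableSet_le h.P_cont.measurable (h.gm.const_mul v))
  have hw : 11 * v < 1 := by linarith
  have h1 := h.H3a hκ hB hG hp hv rfl hw hAm (fun y hy => hy)
  have h2 : ∫⁻ y in Ioi 0, {y | τ y < v}.indicator (fun y => ENNReal.ofReal (g y)) y ≤
      ∫⁻ y in A, ENNReal.ofReal (g y) := by
    rw [← lintegral_indicator measurableSet_Ioi, ← lintegral_indicator hAm]
    refine lintegral_mono_ae ?_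
    filter_upwards [h.tg] with y hy
    by_cases h0 : 0 < y
    · by_cases h1 : τ y < v
      · have : y ∈ A := ⟨h0, by rw [← hy h0]; exact mul_le_mul_of_nonneg_right h1.le (h.g0 y)⟩
        rw [indicator_of_mem this]
        simp [indicator, h0, h1]
      · simp [indicator, h1]
    · simp [indicator, h0]
  refine h2.trans (h1.trans (ENNReal.ofReal_le_ofReal ?_))
  have hv0 : 0 < 11 * v := by positivity
  set β := min 1 (2 * α) with hβ
  have hβ0 : 0 < β := lt_min one_pos (by positivity)
  have e1 : ((11 * v)^2) ^ α ≤ 11 * v ^ β := by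
    rw [← Real.rpow_natCast, ← Real.rpow_mul hv0.le]
    calc (11 * v) ^ (((2:ℕ):ℝ) * α) ≤ (11 * v) ^ β :=
          Real.rpow_le_rpow_of_exponent_ge hv0 hw.le (by rw [hβ]; push_cast; exact min_le_right _ _)
      _ = 11 ^ β * v ^ β := Real.mul_rpow (by norm_num) hv.le
      _ ≤ 11 ^ (1:ℝ) * v ^ β := by
          gcongr
          · norm_num
          · exact min_le_left _ _
      _ = _ := by simp
  have e2 : (1 - (11 * v)^2)⁻¹ ≤ 169 / 48 := by
    rw [inv_le_comm₀ (by nlinarith) (by norm_num)]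
    nlinarith
  have e3 : 0 ≤ (1 - (11 * v)^2)⁻¹ := inv_nonneg.2 (by nlinarith)
  calc _ ≤ 3 * κ * (169/48) * (11 * v ^ β) := by gcongr
    _ ≤ _ := by
      have : 0 < κ * v ^ β := by positivity
      nlinarith

end HL


lemma split_int {k : ℝ → ℝ} (hk : IntegrableOn k (Ioi 0))
    (hk' : IntegrableOn (fun x => k (-x)) (Ioi 0)) :
    Integrable k ∧ ∫ x, k x = (∫ x in Ioi 0, k x) + ∫ x in Ioi 0, k (-x) := by
  have h2 : IntegrableOn k (Iic 0) := by
    have := (integrable_indicator_iff measurableSet_Ioi).2 hk'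
    have h4 := this.comp_neg
    rw [integrableOn_Iic_iff_integrableOn_Iio, ← integrable_indicator_iff measurableSet_Iio]
    refine h4.congr (Eventually.of_forall fun x => ?_)
    simp [indicator]
  have h3 : Integrable k := by
    rw [← integrableOn_univ, ← Iic_union_Ioi (a := (0:ℝ))]
    exact h2.union hk
  refine ⟨h3, ?_⟩
  rw [integral_comp_neg_Ioi, neg_zero, add_comm]
  have := integral_add_compl (s := Iic (0:ℝ)) measurableSet_Iic h3
  rw [compl_Iic] at this
  exact this.symm

lemma split_int' {k : ℝ → ℝ} (hk : Integrable k) :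
    ∫ x, k x = (∫ x in Ioi 0, k x) + ∫ x in Ioi 0, k (-x) :=
  (split_int hk.integrableOn hk.comp_neg.integrableOn).2

lemma split_lint (k : ℝ → ENNReal) :
    ∫⁻ x, k x = (∫⁻ x in Ioi 0, k x) + ∫⁻ x in Ioi 0, k (-x) := by
  have h1 := lintegral_add_compl (μ := volume) k (A := Ioi (0:ℝ)) measurableSet_Ioi
  have h2 : ∫⁻ x in Ioi 0, k (-x) = ∫⁻ x in (Ioi (0:ℝ))ᶜ, k x := by
    rw [← lintegral_indicator measurableSet_Ioi, ← lintegral_indicator measurableSet_Ioi.compl,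
      ← lintegral_neg_eq_self]
    refine lintegral_congr_ae ?_
    filter_upwards [Measure.ae_ne volume (0:ℝ)] with x hx
    have h3 : x < 0 ↔ x ≤ 0 := ⟨le_of_lt, fun h => lt_of_le_of_ne h hx⟩
    simp [indicator, h3]
  rw [h2, h1]

structure TS (g τ : ℝ → ℝ) : Prop where
  gm : Measurable g
  g0 : ∀ x, 0 ≤ g x
  gi : Integrable g
  g2 : Integrable (fun x => x ^ 2 * g x)
  tm : Measurable τ
  tg : ∀ᵐ x, τ x * g x = PP g x
  ei : Integrable (fun x => (1 - τ x) ^ 2 * g x)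
  m0 : ∫ x, g x = 1
  m1 : ∫ x, x * g x = 0
  m2 : ∫ x, x ^ 2 * g x = 1

namespace TS
variable {g τ : ℝ → ℝ}

lemma g1 (h : TS g τ) : Integrable (fun x => x * g x) := by
  refine (h.gi.add h.g2).mono' (by have := h.gm; fun_prop) (Eventually.of_forall fun x => ?_)
  simp only [Pi.add_apply, norm_mul, Real.norm_eq_abs, abs_of_nonneg (h.g0 x)]
  have : |x| ≤ 1 + x ^ 2 := by nlinarith [sq_abs x, sq_nonneg (|x| - 1)]
  nlinarith [h.g0 x]

lemma PPneg (h : TS g τ) (x : ℝ) : PP (fun y => g (-y)) x = PP g (-x) := by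
  unfold PP
  have e : ∫ y in Ioi x, y * g (-y) = - ∫ y in Ioi x, (-y) * g (-y) := by
    rw [← integral_neg]; congr 1; funext y; ring
  rw [e, integral_comp_neg_Ioi (f := fun y => y * g y)]
  have := integral_add_compl (s := Iic (-x)) measurableSet_Iic h.g1
  rw [compl_Iic, h.m1] at this
  linarith

lemma p0 (h : TS g τ) : 0 < PP g 0 := by
  have hn : 0 ≤ PP g 0 := setIntegral_nonneg measurableSet_Ioi fun y hy =>
    mul_nonneg (le_of_lt hy) (h.g0 y)
  refine lt_of_le_of_ne hn fun h0 => ?_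
  have habs : Integrable (fun x => |x| * g x) := by
    refine h.g1.norm.congr (Eventually.of_forall fun x => ?_)
    simp [abs_of_nonneg (h.g0 x)]
  have e : ∫ x, |x| * g x = 0 := by
    rw [split_int' habs]
    have e1 : ∫ x in Ioi 0, |x| * g x = PP g 0 :=
      setIntegral_congr_fun measurableSet_Ioi fun x hx => by
        have hx : 0 < x := hx
        simp [abs_of_pos hx]
    have e2 : ∫ x in Ioi 0, |-x| * g (-x) = PP (fun y => g (-y)) 0 :=
      setIntegral_congr_fun measurableSet_Ioi fun x hx => by
        have hx : 0 < x := hx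
        simp [abs_of_pos hx]
    rw [e1, e2, h.PPneg, neg_zero, ← h0, add_zero]
  have e3 := (integral_eq_zero_iff_of_nonneg (fun x => mul_nonneg (abs_nonneg x) (h.g0 x)) habs).1 e
  have e4 : g =ᵐ[volume] 0 := by
    filter_upwards [e3, Measure.ae_ne volume (0:ℝ)] with x hx hx0
    simp only [Pi.zero_apply, mul_eq_zero, abs_eq_zero] at hx
    tauto
  have := h.m0
  rw [integral_congr_ae e4] at this
  simp at this

lemma hl (h : TS g τ) : HL g τ where
  gm := h.gm
  g0 := h.g0
  gi := h.gi
  g2 := h.g2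
  tm := h.tm
  tg := by filter_upwards [h.tg] with x hx _ using hx
  ei := h.ei
  p0 := h.p0

lemma ae_neg {p : ℝ → Prop} (hp : ∀ᵐ x, p x) : ∀ᵐ x : ℝ, p (-x) :=
  (Measure.measurePreserving_neg (volume : Measure ℝ)).quasiMeasurePreserving.ae hp

lemma neg (h : TS g τ) : TS (fun x => g (-x)) (fun x => τ (-x)) where
  gm := h.gm.comp measurable_neg
  g0 := fun x => h.g0 _
  gi := h.gi.comp_neg
  g2 := by simpa using h.g2.comp_neg
  tm := h.tm.comp measurable_neg
  tg := by
    filter_upwards [ae_neg h.tg] with x hx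
    rw [hx, h.PPneg]
  ei := h.ei.comp_neg
  m0 := by rw [integral_neg_eq_self (fun x => g x)]; exact h.m0
  m1 := by
    have := integral_neg_eq_self (fun x => x * g x) volume
    rw [h.m1] at this
    simp only [neg_mul] at this
    rw [integral_neg] at this
    linarith
  m2 := by
    have := integral_neg_eq_self (fun x => x ^ 2 * g x) volume
    simpa [h.m2] using this

noncomputable def dd (g τ : ℝ → ℝ) : ℝ := ∫ x, (1 - τ x) ^ 2 * g x

lemma dd_eq (h : TS g τ) : dd g τ = HL.dp g τ + HL.dp (fun x => g (-x)) (fun x => τ (-x)) :=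
  split_int' h.ei

lemma dd_nonneg (h : TS g τ) : 0 ≤ dd g τ := integral_nonneg fun x => mul_nonneg (sq_nonneg _) (h.g0 x)

lemma GGadd (h : TS g τ) : GG g 0 + GG (fun x => g (-x)) 0 = 1 := by
  rw [← h.m0, split_int' h.gi]; rfl

lemma pdf_neg (x : ℝ) : gaussianPDFReal 0 1 (-x) = gaussianPDFReal 0 1 x := by
  simp [gpdf]

/-- entropy-type bound -/
lemma D1 (h : TS g τ) :
    Integrable (fun x => g x * Real.log (PP g x / gaussianPDFReal 0 1 x)) ∧
    ∫ x, g x * Real.log (PP g x / gaussianPDFReal 0 1 x) ≤ 2 * dd g τ := by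
  have a := h.hl.H1
  have b := h.neg.hl.H1
  simp_rw [h.PPneg] at b
  have e := split_int (k := fun x => g x * Real.log (PP g x / gaussianPDFReal 0 1 x)) a.1
    (by simp_rw [pdf_neg]; exact b.1)
  refine ⟨e.1, ?_⟩
  rw [e.2]
  simp_rw [pdf_neg]
  have c := split_int' h.g2
  simp only [neg_sq] at c
  rw [h.m2] at c
  have hp := h.p0
  have hl := Real.log_le_sub_one_of_pos (show 0 < PP g 0 * √(2 * Real.pi) by positivity)
  have hG := h.GGadd
  have b2 := b.2
  rw [neg_zero] at b2
  have e3 : GG g 0 * Real.log (PP g 0 * √(2 * Real.pi)) +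
      GG (fun x => g (-x)) 0 * Real.log (PP g 0 * √(2 * Real.pi)) = Real.log (PP g 0 * √(2 * Real.pi)) := by
    rw [← add_mul, hG, one_mul]
  rw [h.dd_eq]
  linarith [a.2]

lemma tau_one (h : TS g τ) : ∫ x, τ x * g x = 1 := by
  have half : ∀ {g τ : ℝ → ℝ}, TS g τ → ∫ x in Ioi 0, τ x * g x = ∫ x in Ioi 0, x ^ 2 * g x := by
    intro g τ h
    have e : ∫ x in Ioi 0, τ x * g x = ∫ x in Ioi 0, 1 * PP g x := by
      refine integral_congr_ae (ae_restrict_of_ae ?_)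
      filter_upwards [h.tg] with x hx
      rw [hx, one_mul]
    rw [e, (h.hl.PI (a := fun _ => 1) (by fun_prop) (by simp) le_rfl).2.2]
    congr 1; funext t; simp; ring
  rw [split_int' h.hl.tgi, half h, ← h.m2, split_int' h.g2]
  congr 1
  have := half h.neg
  simpa using this

lemma Q (h : TS g τ) :
    ∫ x, {x | g x = 0}.indicator (gaussianPDFReal 0 1) x ≤
      Real.exp 1 * (dd g τ / (√(2 * Real.pi) * PP g 0)) := by
  have hi : Integrable ({x | g x = 0}.indicator (gaussianPDFReal 0 1)) :=
    (integrable_gaussianPDFReal 0 1).indicator (h.gm (measurableSet_singleton 0))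
  rw [split_int' hi, h.dd_eq]
  have a := h.hl.H2
  have b := h.neg.hl.H2
  rw [h.PPneg, neg_zero] at b
  have e : ∀ x, {x | g x = 0}.indicator (gaussianPDFReal 0 1) (-x) =
      {x | g (-x) = 0}.indicator (gaussianPDFReal 0 1) x := by
    intro x; simp only [indicator, mem_ofPred_eq, pdf_neg]
  simp_rw [e]
  rw [add_div, mul_add]
  exact add_le_add a b

lemma Q1 (h : TS g τ) : ∫ x, {x | g x = 0}.indicator (gaussianPDFReal 0 1) x ≤ 1 := by
  rw [← integral_gaussianPDFReal_eq_one 0 (one_ne_zero), ]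
  refine integral_mono_of_nonneg (Eventually.of_forall fun x => indicator_nonneg (fun _ _ => gaussianPDFReal_nonneg _ _ _) _)
    (integrable_gaussianPDFReal 0 1) (Eventually.of_forall fun x => ?_)
  exact indicator_le_self' (fun _ _ => gaussianPDFReal_nonneg _ _ _) x

/-- third-moment bound on half line -/
lemma third_half (h : TS g τ) {s : ℝ} (hs : 0 < s) :
    IntegrableOn (fun t => t ^ 3 * g t) (Ioi 0) ∧
    ∫ t in Ioi 0, t ^ 3 * g t ≤ 2 * PP g 0 + s * (∫ t in Ioi 0, t ^ 2 * g t) + HL.dp g τ / s := by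
  have hb : Measurable fun t => t * g t := by have := h.gm; fun_prop
  have hae : ∀ᵐ y, y ∈ Ioi (0:ℝ) → 2 * y * PP g y = 2 * y * τ y * g y := by
    filter_upwards [h.tg] with y hy _
    rw [← hy]; ring
  have hdom : Integrable (fun y => 2 * |y * g y| + s * (y ^ 2 * g y) + s⁻¹ * ((1 - τ y)^2 * g y)) :=
    ((h.g1.abs.const_mul 2).add (h.g2.const_mul s)).add (h.ei.const_mul s⁻¹)
  have hpt : ∀ y, |2 * y * τ y * g y| ≤ 2 * |y * g y| + s * (y ^ 2 * g y) + s⁻¹ * ((1 - τ y)^2 * g y) := by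
    intro y
    have e : 2 * y * τ y * g y = 2 * (y * g y) + (- (2 * y * (1 - τ y))) * g y := by ring
    have h1 : |2 * y * (1 - τ y)| ≤ s * y ^ 2 + s⁻¹ * (1 - τ y)^2 := by
      rw [abs_le]
      have e1 : s * y ^ 2 + s⁻¹ * (1 - τ y)^2 + 2 * y * (1 - τ y) = s⁻¹ * (s * y + (1 - τ y))^2 := by
        field_simp; ring
      have e2 : s * y ^ 2 + s⁻¹ * (1 - τ y)^2 - 2 * y * (1 - τ y) = s⁻¹ * (s * y - (1 - τ y))^2 := by
        field_simp; ring
      have p1 : 0 ≤ s⁻¹ * (s * y + (1 - τ y))^2 := by positivity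
      have p2 : 0 ≤ s⁻¹ * (s * y - (1 - τ y))^2 := by positivity
      constructor <;> linarith
    rw [e]
    refine (abs_add_le _ _).trans ?_
    rw [abs_mul 2, abs_mul (-(2 * y * (1 - τ y))), abs_neg, abs_two, abs_of_nonneg (h.g0 y)]
    nlinarith [h.g0 y]
  have hi1 : Integrable (fun y => 2 * y * τ y * g y) :=
    hdom.mono' (by have := h.gm; have := h.tm; fun_prop) (Eventually.of_forall hpt)
  have hi : IntegrableOn (fun y => 2 * y * PP g y) (Ioi 0) :=
    hi1.integrableOn.congr ((ae_restrict_iff' measurableSet_Ioi).2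
      (by filter_upwards [hae] with y hy hy0 using (hy hy0).symm))
  obtain ⟨f1, f2⟩ := fub (a := fun y => 2 * y) (by fun_prop) hb 0 h.g1 (by
    refine hi.congr_fun (fun y hy => ?_) measurableSet_Ioi
    simp only
    congr 1
    refine setIntegral_congr_fun measurableSet_Ioi fun t ht => ?_
    have : 0 < t := lt_trans hy ht
    simp only [abs_of_nonneg (mul_nonneg this.le (h.g0 t))])
  have hI : ∀ t : ℝ, ∫ y in (0:ℝ)..t, 2 * y = t ^ 2 := by
    intro t; rw [intervalIntegral.integral_const_mul, integral_id]; ring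
  simp_rw [hI] at f1 f2
  have e0 : (fun t => t ^ 3 * g t) = fun t => t * g t * t ^ 2 := by funext t; ring
  rw [e0]
  refine ⟨f1, ?_⟩
  rw [← f2]
  have e5 : ∫ y in Ioi 0, 2 * y * ∫ t in Ioi y, t * g t = ∫ y in Ioi 0, 2 * y * τ y * g y :=
    integral_congr_ae ((ae_restrict_iff' measurableSet_Ioi).2 hae)
  rw [e5]
  calc _ ≤ ∫ y in Ioi 0, (2 * |y * g y| + s * (y ^ 2 * g y) + s⁻¹ * ((1 - τ y)^2 * g y)) :=
        integral_mono hi1.integrableOn hdom.integrableOn fun y => (le_abs_self _).trans (hpt y)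
    _ = _ := by
      have hq : IntegrableOn (fun y => 2 * |y * g y| + s * (y ^ 2 * g y)) (Ioi 0) :=
        (h.g1.abs.const_mul 2).integrableOn.add (h.g2.const_mul s).integrableOn
      rw [integral_add hq (h.ei.const_mul s⁻¹).integrableOn, integral_add (h.g1.abs.const_mul 2).integrableOn
        (h.g2.const_mul s).integrableOn, integral_const_mul, integral_const_mul, integral_const_mul]
      have : ∫ y in Ioi 0, |y * g y| = PP g 0 :=
        setIntegral_congr_fun measurableSet_Ioi fun y hy =>
          abs_of_nonneg (mul_nonneg (le_of_lt hy) (h.g0 y))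
      rw [this]
      unfold HL.dp
      field_simp

lemma second_half (h : TS g τ) {s r : ℝ} (hs : 0 < s) (hr : 0 < r) :
    2 * ∫ t in Ioi 0, t ^ 2 * g t ≤ r * PP g 0 + (2 * PP g 0 + s * (∫ t in Ioi 0, t ^ 2 * g t) + HL.dp g τ / s) / r := by
  obtain ⟨h1, h2⟩ := h.third_half hs
  have : 2 * ∫ t in Ioi 0, t ^ 2 * g t ≤ r * PP g 0 + (∫ t in Ioi 0, t ^ 3 * g t) / r := by
    unfold PP
    rw [div_eq_inv_mul, ← integral_const_mul, ← integral_const_mul, ← integral_const_mul,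
      ← integral_add (h.g1.const_mul r).integrableOn (h1.const_mul r⁻¹)]
    refine setIntegral_mono_on (h.g2.const_mul 2).integrableOn
      ((h.g1.const_mul r).integrableOn.add (h1.const_mul r⁻¹)) measurableSet_Ioi fun t ht => ?_
    have ht : 0 < t := ht
    have hg := h.g0 t
    have e : r * (t * g t) + r⁻¹ * (t^3 * g t) - 2 * (t^2 * g t) = t * g t / r * (t - r) ^ 2 := by
      field_simp; ring
    have : 0 ≤ t * g t / r * (t - r) ^ 2 := by positivity
    linarith
  refine this.trans ?_
  gcongr

lemma p0_gen (h : TS g τ) {s r : ℝ} (hs : 0 < s) (hr : 0 < r) :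
    2 ≤ 2 * r * PP g 0 + (4 * PP g 0 + s + dd g τ / s) / r := by
  have a := h.second_half hs hr
  have b := h.neg.second_half hs hr
  have c := split_int' h.g2
  simp only [neg_sq] at c
  rw [h.m2] at c
  rw [h.PPneg, neg_zero] at b
  rw [h.dd_eq]
  calc (2:ℝ) = _ := (by rw [← mul_add, ← c, mul_one] : (2:ℝ) = 2 * (∫ t in Ioi 0, t ^ 2 * g t) + 2 * ∫ t in Ioi 0, t ^ 2 * g (-t))
    _ ≤ _ := add_le_add a b
    _ = 2 * r * PP g 0 + (4 * PP g 0 + s * ((∫ t in Ioi 0, t ^ 2 * g t) + ∫ t in Ioi 0, t ^ 2 * g (-t)) + (HL.dp g τ + HL.dp (fun x => g (-x)) (fun x => τ (-x))) / s) / r := by ring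
    _ = _ := by rw [← c, mul_one]

lemma p0_a (h : TS g τ) (hd : dd g τ ≤ 1) : 2 / 11 ≤ PP g 0 := by
  have := h.p0_gen (s := 1) (r := 11/4) (by norm_num) (by norm_num)
  linarith

lemma p0_b (h : TS g τ) (hd : dd g τ ≤ 1/4) : 1 / 4 ≤ PP g 0 := by
  have := h.p0_gen (s := 1/2) (r := 2) (by norm_num) (by norm_num)
  linarith

end TS


lemma kfun_nonneg {t : ℝ} (ht : 0 < t) : 0 ≤ t - 1 - Real.log t := by
  linarith [Real.log_le_sub_one_of_pos ht]

lemma kfun_le {t v : ℝ} (ht : 0 < t) (hv : 0 < v) (hv1 : v ≤ 1) :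
    t - 1 - Real.log t ≤ (1/2 + Real.log (1 / v)) * (1 - t) ^ 2 + max 0 (Real.log (v / t)) := by
  have hlv : 0 ≤ Real.log (1 / v) := Real.log_nonneg (by rw [le_div_iff₀ hv]; linarith)
  rcases le_or_gt 1 t with h1 | h1
  · have h := Real.le_log_one_add_of_nonneg (x := t - 1) (by linarith)
    rw [show 1 + (t - 1) = t by ring, show t - 1 + 2 = t + 1 by ring] at h
    have h2 : t - 1 - 2 * (t - 1) / (t + 1) ≤ 1/2 * (1 - t) ^ 2 := by
      rw [sub_le_iff_le_add, ← sub_le_iff_le_add', le_div_iff₀ (by linarith)]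
      nlinarith [mul_nonneg (sub_nonneg.2 h1) (sq_nonneg (t - 1)), sq_nonneg (t-1)]
    have := mul_nonneg hlv (sq_nonneg (1 - t))
    nlinarith [le_max_left 0 (Real.log (v / t))]
  · have hl : 0 ≤ - Real.log t := by have := Real.log_nonpos ht.le h1.le; linarith
    have hs := Real.self_le_sinh_iff.2 hl
    rw [Real.sinh_eq, neg_neg, Real.exp_neg, Real.exp_log ht] at hs
    have h3 : (-Real.log t) * (2 * t) ≤ 1 - t ^ 2 := by
      have := mul_le_mul_of_nonneg_right hs (show 0 ≤ 2 * t by linarith)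
      have e : (t⁻¹ - t) / 2 * (2 * t) = 1 - t ^ 2 := by field_simp
      linarith
    have e : -Real.log t = Real.log (1 / v) + Real.log (v / t) := by
      rw [Real.log_div one_ne_zero hv.ne', Real.log_div hv.ne' ht.ne', Real.log_one]; ring
    set l := -Real.log t with hldef
    have h4 : t - 1 - Real.log t ≤ 1/2 * (1-t)^2 + (1-t)^2 * l := by
      have h5 : 0 ≤ t ^ 2 * l := mul_nonneg (sq_nonneg t) hl
      nlinarith
    have h6 : (1-t)^2 * Real.log (v / t) ≤ max 0 (Real.log (v / t)) := by
      have h7 : (1-t)^2 ≤ 1 := by nlinarith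
      calc _ ≤ (1-t)^2 * max 0 (Real.log (v / t)) :=
            mul_le_mul_of_nonneg_left (le_max_right _ _) (sq_nonneg _)
        _ ≤ 1 * max 0 (Real.log (v / t)) := mul_le_mul_of_nonneg_right h7 (le_max_left _ _)
        _ = _ := one_mul _
    rw [e] at h4
    nlinarith

lemma TVB.neg {g : ℝ → ℝ} {κ α : ℝ} (h : TVB g κ α) : TVB (fun x => g (-x)) κ α := by
  intro x t ht A hA
  have h1 := h (-x) t ht (Neg.neg ⁻¹' A) (measurable_neg hA)
  rw [abs_neg] at h1
  refine le_trans (le_of_eq ?_) (h1.trans (le_of_eq ?_))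
  · rw [← lintegral_indicator hA, ← lintegral_indicator (measurable_neg hA), ← lintegral_neg_eq_self]
    simp only [indicator, neg_neg]
    rfl
  · congr 1
    rw [← lintegral_neg_eq_self]
    refine lintegral_congr fun y => ?_
    have e : (√t * -y + √(1-t) * -x) = -(√t * y + √(1-t) * x) := by ring
    rw [e]
    congr 1
    by_cases hm : √t * y + √(1-t) * x ∈ A
    · rw [indicator_of_mem hm, indicator_of_mem (by rw [mem_preimage, neg_neg]; exact hm)]; rfl
    · rw [indicator_of_notMem hm, indicator_of_notMem (by rw [mem_preimage, neg_neg]; exact hm)]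

namespace TS
variable {g τ : ℝ → ℝ}

lemma small (h : TS g τ) {κ α v : ℝ} (hκ : 0 < κ) (hα : 0 < α) (hB : TVB g κ α)
    (hd : dd g τ ≤ 1) (hv : 0 < v) (hv1 : v ≤ 1/13) :
    ∫⁻ y, {y | τ y < v}.indicator (fun y => ENNReal.ofReal (g y)) y ≤
      ENNReal.ofReal (233 * κ * v ^ (min 1 (2*α))) := by
  have hg := h.GGadd
  have a := h.hl.H3 hκ hα hB (by linarith [h.neg.hl.G_nonneg 0]) (h.p0_a hd) hv hv1
  have hd' : dd (fun x => g (-x)) (fun x => τ (-x)) ≤ 1 := by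
    have e1 := h.dd_eq; have e2 := h.neg.dd_eq; simp only [neg_neg] at e2
    have e3 : HL.dp (fun x => g x) (fun x => τ x) = HL.dp g τ := rfl
    linarith
  have b := h.neg.hl.H3 hκ hα hB.neg (by linarith [h.hl.G_nonneg 0]) (h.neg.p0_a hd') hv hv1
  rw [split_lint]
  refine (add_le_add a (le_trans (le_of_eq ?_) b)).trans (le_of_eq ?_)
  · rfl
  · rw [← ENNReal.ofReal_add (by positivity) (by positivity)]; congr 1; ring

lemma tpos (h : TS g τ) : ∀ᵐ x, g x ≠ 0 → 0 < τ x ∧ 0 < PP g x := by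
  have a := h.hl.P_pos
  have b := ae_neg h.neg.hl.P_pos
  filter_upwards [a, b, h.tg, Measure.ae_ne volume (0:ℝ)] with x h1 h2 h3 h4 h5
  have hp : 0 < PP g x := by
    rcases lt_or_gt_of_ne h4 with h6 | h6
    · rw [h.PPneg] at h2
      simp only [neg_neg] at h2
      exact h2 (by linarith) h5
    · exact h1 h6 h5
  refine ⟨?_, hp⟩
  rw [← h3] at hp
  exact pos_of_mul_pos_left hp (h.g0 x)

/-- truncated logarithm -/
noncomputable def LL (v t : ℝ) : ℝ := if 0 < t then max 0 (Real.log (v / t)) else 0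

lemma LL_meas (h : TS g τ) (v : ℝ) : Measurable fun x => LL v (τ x) := by
  unfold LL
  have := h.tm
  exact Measurable.ite (measurableSet_lt measurable_const h.tm) (by fun_prop) measurable_const

lemma LL_nonneg (v t : ℝ) : 0 ≤ LL v t := by
  unfold LL; split_ifs; exact le_max_left _ _; exact le_rfl

lemma LLbound (h : TS g τ) {κ α v : ℝ} (hκ : 0 < κ) (hα : 0 < α) (hB : TVB g κ α)
    (hd : dd g τ ≤ 1) (hv : 0 < v) (hv1 : v ≤ 1/13) :
    ∫⁻ x, ENNReal.ofReal (g x * LL v (τ x)) ≤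
      ENNReal.ofReal (233 * κ * v ^ (min 1 (2*α)) / (min 1 (2*α))) := by
  set β := min 1 (2*α) with hβ
  have hβ0 : 0 < β := lt_min one_pos (by linarith)
  have hgm : Measurable fun x => ENNReal.ofReal (g x) := h.gm.ennreal_ofReal
  have e1 : ∫⁻ x, ENNReal.ofReal (g x * LL v (τ x)) =
      ∫⁻ x, ENNReal.ofReal (LL v (τ x)) ∂(volume.withDensity fun x => ENNReal.ofReal (g x)) := by
    rw [lintegral_withDensity_eq_lintegral_mul _ hgm (h.LL_meas v).ennreal_ofReal]
    refine lintegral_congr fun x => ?_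
    rw [ENNReal.ofReal_mul (h.g0 x)]; rfl
  rw [e1, lintegral_eq_lintegral_meas_lt _ (Eventually.of_forall fun x => LL_nonneg _ _)
    (h.LL_meas v).aemeasurable]
  have e2 : ∀ s ∈ Ioi (0:ℝ), (volume.withDensity fun x => ENNReal.ofReal (g x)) {a | s < LL v (τ a)} ≤
      ENNReal.ofReal (233 * κ * v ^ β * Real.exp (-β * s)) := by
    intro s hs
    have hs : 0 < s := hs
    have hv' : 0 < v * Real.exp (-s) := mul_pos hv (Real.exp_pos _)
    have hv1' : v * Real.exp (-s) ≤ 1/13 := by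
      have : Real.exp (-s) ≤ 1 := Real.exp_le_one_iff.2 (by linarith)
      nlinarith
    have := h.small hκ hα hB hd hv' hv1'
    rw [withDensity_apply _ (measurableSet_lt measurable_const (h.LL_meas v)),
      ← lintegral_indicator (measurableSet_lt measurable_const (h.LL_meas v))]
    refine le_trans (lintegral_mono fun x => ?_) (this.trans (le_of_eq ?_))
    · refine indicator_le_indicator_of_subset (fun y hy => ?_) (fun _ => zero_le) x
      have hy : s < LL v (τ y) := hy
      show τ y < v * Real.exp (-s)
      unfold LL at hy
      split_ifs at hy with h1
      · rcases lt_max_iff.1 hy with h2 | h2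
        · linarith
        · rw [Real.lt_log_iff_exp_lt (div_pos hv h1), lt_div_iff₀ h1] at h2
          rw [Real.exp_neg, ← div_eq_mul_inv, lt_div_iff₀ (Real.exp_pos _)]
          linarith
      · linarith
    · rw [Real.mul_rpow hv.le (Real.exp_pos _).le, ← Real.exp_mul]
      congr 1
      rw [← hβ]
      rw [show -s * β = -β * s by ring]; ring
  refine (setLIntegral_mono' measurableSet_Ioi e2).trans ?_
  have hi : IntegrableOn (fun s => 233 * κ * v ^ β * Real.exp (-β * s)) (Ioi 0) :=
    (exp_neg_integrableOn_Ioi 0 hβ0).const_mul _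
  rw [← ofReal_integral_eq_lintegral_ofReal hi (Eventually.of_forall fun s => by positivity)]
  apply ENNReal.ofReal_le_ofReal
  rw [integral_const_mul, integral_exp_mul_Ioi (by linarith) 0]
  simp only [mul_zero, Real.exp_zero, neg_div_neg_eq]
  rw [← mul_div_assoc, mul_one]

lemma Ek (h : TS g τ) {κ α v : ℝ} (hκ : 0 < κ) (hα : 0 < α) (hB : TVB g κ α)
    (hd : dd g τ ≤ 1) (hv : 0 < v) (hv1 : v ≤ 1/13) :
    Integrable (fun x => g x * (τ x - 1 - Real.log (τ x))) ∧
    ∫ x, g x * (τ x - 1 - Real.log (τ x)) ≤ (1/2 + Real.log (1 / v)) * dd g τ +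
      233 * κ * v ^ (min 1 (2*α)) / (min 1 (2*α)) := by
  have hL := h.LLbound hκ hα hB hd hv hv1
  have hβ0 : 0 < min 1 (2*α) := lt_min one_pos (by linarith)
  have hLi : Integrable fun x => g x * LL v (τ x) := by
    refine ⟨(h.gm.mul (h.LL_meas v)).aestronglyMeasurable, ?_⟩
    rw [hasFiniteIntegral_iff_ofReal (Eventually.of_forall fun x => mul_nonneg (h.g0 x) (LL_nonneg _ _))]
    exact hL.trans_lt ENNReal.ofReal_lt_top
  have hLv : ∫ x, g x * LL v (τ x) ≤ 233 * κ * v ^ (min 1 (2*α)) / (min 1 (2*α)) := by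
    rw [integral_eq_lintegral_of_nonneg_ae (Eventually.of_forall fun x => mul_nonneg (h.g0 x) (LL_nonneg _ _))
      hLi.1]
    exact ENNReal.toReal_le_of_le_ofReal (by positivity) hL
  have hm : AEStronglyMeasurable (fun x => g x * (τ x - 1 - Real.log (τ x))) volume := by
    have := h.gm; have := h.tm
    exact Measurable.aestronglyMeasurable (by fun_prop)
  have hb : ∀ᵐ x, 0 ≤ g x * (τ x - 1 - Real.log (τ x)) ∧ g x * (τ x - 1 - Real.log (τ x)) ≤
      (1/2 + Real.log (1 / v)) * ((1 - τ x) ^ 2 * g x) + g x * LL v (τ x) := by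
    filter_upwards [h.tpos] with x hx
    by_cases h0 : g x = 0
    · simp [h0]
    · obtain ⟨ht, -⟩ := hx h0
      refine ⟨mul_nonneg (h.g0 x) (kfun_nonneg ht), ?_⟩
      have := mul_le_mul_of_nonneg_left (kfun_le ht hv (by linarith)) (h.g0 x)
      unfold LL
      rw [if_pos ht]
      linarith
  have hi1 : Integrable (fun x => (1/2 + Real.log (1 / v)) * ((1 - τ x) ^ 2 * g x)) := h.ei.const_mul _
  have hi : Integrable (fun x => g x * (τ x - 1 - Real.log (τ x))) := by
    refine (hi1.add hLi).mono' hm ?_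
    filter_upwards [hb] with x hx
    rw [Real.norm_of_nonneg hx.1]; exact hx.2
  refine ⟨hi, ?_⟩
  have h12 : Integrable (fun x => (1/2 + Real.log (1 / v)) * ((1 - τ x) ^ 2 * g x) + g x * LL v (τ x)) :=
    hi1.add hLi
  have := integral_mono_ae hi h12 (hb.mono fun x hx => hx.2)
  rw [integral_add hi1 hLi, integral_const_mul] at this
  unfold dd
  linarith

lemma Dg (h : TS g τ) {κ α v : ℝ} (hκ : 0 < κ) (hα : 0 < α) (hB : TVB g κ α)
    (hd : dd g τ ≤ 1) (hv : 0 < v) (hv1 : v ≤ 1/13) :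
    Integrable (fun x => g x * Real.log (g x / gaussianPDFReal 0 1 x)) ∧
    ∫ x, g x * Real.log (g x / gaussianPDFReal 0 1 x) ≤ (5/2 + Real.log (1 / v)) * dd g τ +
      233 * κ * v ^ (min 1 (2*α)) / (min 1 (2*α)) := by
  obtain ⟨a1, a2⟩ := h.D1
  obtain ⟨b1, b2⟩ := h.Ek hκ hα hB hd hv hv1
  have c1 : Integrable (fun x => g x - τ x * g x) := h.gi.sub h.hl.tgi
  have c2 : ∫ x, (g x - τ x * g x) = 0 := by
    rw [integral_sub h.gi h.hl.tgi, h.m0, h.tau_one, sub_self]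
  have e : (fun x => g x * Real.log (g x / gaussianPDFReal 0 1 x)) =ᵐ[volume]
     fun x => g x * Real.log (PP g x / gaussianPDFReal 0 1 x) + g x * (τ x - 1 - Real.log (τ x))
        + (g x - τ x * g x) := by
    filter_upwards [h.tpos, h.tg] with x hx ht
    by_cases h0 : g x = 0
    · simp [h0]
    · obtain ⟨h1, h2⟩ := hx h0
      have hφ := gaussianPDFReal_pos 0 1 x one_ne_zero
      rw [Real.log_div h0 hφ.ne', Real.log_div h2.ne' hφ.ne', ← ht, Real.log_mul h1.ne' h0]
      ring
  have ab : Integrable (fun x => g x * Real.log (PP g x / gaussianPDFReal 0 1 x) + g x * (τ x - 1 - Real.log (τ x))) := a1.add b1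
  refine ⟨(ab.add c1).congr e.symm, ?_⟩
  rw [integral_congr_ae e, integral_add ab c1, integral_add a1 b1, c2]
  linarith

lemma Qe (h : TS g τ) :
    (Real.exp 1)⁻¹ * ∫ x, {x | g x = 0}.indicator (gaussianPDFReal 0 1) x ≤ 8/5 * dd g τ := by
  have he := Real.exp_one_gt_d9
  rw [inv_mul_le_iff₀ (Real.exp_pos 1)]
  rcases le_or_gt (dd g τ) (1/4) with h1 | h1
  · refine h.Q.trans (mul_le_mul_of_nonneg_left ?_ (Real.exp_pos 1).le)
    have hp := h.p0_b h1
    have hs : 5/2 ≤ √(2 * Real.pi) := Real.le_sqrt_of_sq_le (by nlinarith [Real.pi_gt_d2])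
    have : 5/8 ≤ √(2 * Real.pi) * PP g 0 := by nlinarith
    rw [div_le_iff₀ (by linarith)]
    nlinarith [h.dd_nonneg]
  · refine h.Q1.trans ?_
    nlinarith

end TS


section
open scoped ContDiff

lemma fub_whole {a b : ℝ → ℝ} (ha : Integrable a) (hb : Integrable b) :
    ∫ x, b x * ∫ y in Iio x, a y = ∫ y, a y * ∫ x in Ioi y, b x := by
  have hset : MeasurableSet {q : ℝ × ℝ | q.2 < q.1} := measurableSet_lt measurable_snd measurable_fst
  have hi : Integrable (Function.uncurry fun x y : ℝ => {q : ℝ × ℝ | q.2 < q.1}.indicator (fun q => b q.1 * a q.2) (x, y))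
      (volume.prod volume) := (hb.mul_prod ha).indicator hset
  have := integral_integral_swap hi
  have e1 : ∀ x, ∫ y, {q : ℝ × ℝ | q.2 < q.1}.indicator (fun q => b q.1 * a q.2) (x, y) = b x * ∫ y in Iio x, a y := by
    intro x
    rw [← integral_const_mul, ← integral_indicator measurableSet_Iio]
    rfl
  have e2 : ∀ y, ∫ x, {q : ℝ × ℝ | q.2 < q.1}.indicator (fun q => b q.1 * a q.2) (x, y) = a y * ∫ x in Ioi y, b x := by
    intro y
    rw [← integral_const_mul, ← integral_indicator measurableSet_Ioi]
    congr 1; funext x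
    simp only [indicator, mem_Ioi]
    rw [mul_comm]; rfl
  simp_rw [e1, e2] at this
  exact this

lemma stein_ae {g τ : ℝ → ℝ} (gm : Measurable g) (g0 : ∀ x, 0 ≤ g x)
    (g1 : Integrable (fun x => x * g x)) (g2 : Integrable (fun x => x ^ 2 * g x))
    (ti : Integrable (fun x => τ x * g x))
    (hst : ∀ u : ℝ → ℝ, ContDiff ℝ 1 u → HasCompactSupport u →
      ∫ x, (x * u x) * g x = ∫ x, (τ x * deriv u x) * g x) :
    ∀ᵐ x, τ x * g x = PP g x := by
  have Pc : Continuous (PP g) := by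
    have : PP g = fun y => PP g 0 - ∫ t in (0:ℝ)..y, t * g t := by
      funext y
      have : PP g 0 - PP g y = ∫ t in (0:ℝ)..y, t * g t :=
        intervalIntegral.integral_Ioi_sub_Ioi' g1.integrableOn g1.integrableOn
      rw [← this]; ring
    rw [this]
    exact continuous_const.sub (intervalIntegral.continuous_primitive (fun _ _ => g1.intervalIntegrable) _)
  have Pi0 : IntegrableOn (PP g) (Ioi 0) := by
    refine ⟨Pc.aestronglyMeasurable, ?_⟩
    have hP0 : ∀ y ∈ Ioi (0:ℝ), ENNReal.ofReal (PP g y) = 1 * ∫⁻ t in Ioi y, ENNReal.ofReal (t * g t) := by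
      intro y hy
      rw [one_mul]
      unfold PP
      rw [ofReal_integral_eq_lintegral_ofReal g1.integrableOn]
      refine (ae_restrict_iff' measurableSet_Ioi).2 (Eventually.of_forall fun t ht => ?_)
      exact mul_nonneg (le_of_lt (lt_trans hy ht)) (g0 t)
    have hn : ∀ᵐ y ∂(volume.restrict (Ioi (0:ℝ))), 0 ≤ PP g y :=
      (ae_restrict_iff' measurableSet_Ioi).2 (Eventually.of_forall fun y hy =>
        setIntegral_nonneg measurableSet_Ioi fun t ht => mul_nonneg (le_of_lt (lt_trans hy ht)) (g0 t))
    rw [hasFiniteIntegral_iff_ofReal hn, setLIntegral_congr_fun measurableSet_Ioi hP0,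
      lfub (a := fun _ => 1) (b := fun t => ENNReal.ofReal (t * g t)) measurable_const (by fun_prop) 0]
    refine lt_of_le_of_lt ?_ g2.lintegral_lt_top
    refine (setLIntegral_mono' measurableSet_Ioi fun t ht => ?_).trans (setLIntegral_le_lintegral (Ioi 0) _)
    have ht : 0 < t := ht
    simp only [lintegral_const, one_mul, Measure.restrict_apply_univ, Real.volume_Ioo, sub_zero]
    rw [← ENNReal.ofReal_mul (mul_nonneg ht.le (g0 t))]
    apply ENNReal.ofReal_le_ofReal
    apply le_of_eq; ring
  set w : ℝ → ℝ := fun x => τ x * g x - PP g x with hw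
  have wl : LocallyIntegrable w := ti.locallyIntegrable.sub Pc.locallyIntegrable
  -- mean-zero test functions
  have key : ∀ ψ : ℝ → ℝ, ContDiff ℝ ∞ ψ → HasCompactSupport ψ → ∫ x, ψ x = 0 → ∫ x, ψ x * w x = 0 := by
    intro ψ hψ hc h0
    have hψi : Integrable ψ := hψ.continuous.integrable_of_hasCompactSupport hc
    set u : ℝ → ℝ := fun x => ∫ y in Iio x, ψ y with hu
    have hd : ∀ x, HasDerivAt u (ψ x) x := by
      intro x
      have e : u = fun x => u 0 + ∫ y in (0:ℝ)..x, ψ y := by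
        funext x
        simp only [hu, ← integral_Iic_eq_integral_Iio]
        rw [← intervalIntegral.integral_Iic_sub_Iic hψi.integrableOn hψi.integrableOn]; ring
      rw [e]
      exact (intervalIntegral.integral_hasDerivAt_right hψi.intervalIntegrable
        (hψ.continuous.stronglyMeasurableAtFilter _ _) hψ.continuous.continuousAt).const_add _
    have hdu : deriv u = ψ := funext fun x => (hd x).deriv
    have hu1 : ContDiff ℝ 1 u := contDiff_one_iff_deriv.2
      ⟨fun x => (hd x).differentiableAt, by rw [hdu]; exact hψ.continuous⟩
    obtain ⟨R, hR⟩ := hc.isCompact.isBounded.subset_closedBall 0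
    rw [Real.closedBall_eq_Icc, zero_sub, zero_add] at hR
    have hz : ∀ y, y ∉ Icc (-R) R → ψ y = 0 := fun y hy => image_eq_zero_of_notMem_tsupport fun h => hy (hR h)
    have hcu : HasCompactSupport u := by
      refine HasCompactSupport.intro (isCompact_Icc (a := -R) (b := R)) fun x hx => ?_
      simp only [hu]
      rw [mem_Icc, not_and_or, not_le, not_le] at hx
      rcases hx with hx | hx
      · refine setIntegral_eq_zero_of_forall_eq_zero fun y hy => hz y fun h => ?_
        have hy : y < x := hy
        linarith [h.1]
      · rw [setIntegral_eq_integral_of_forall_compl_eq_zero, h0]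
        intro y hy
        refine hz y fun h => hy ?_
        show y < x
        linarith [h.2]
    have h1 := hst u hu1 hcu
    rw [hdu] at h1
    have h2 : ∫ x, (x * u x) * g x = ∫ x, ψ x * PP g x := by
      unfold PP
      rw [← fub_whole hψi g1]
      congr 1; funext x; simp only [hu]; ring
    have i2 : Integrable fun x => ψ x * PP g x :=
      (hψ.continuous.mul Pc).integrable_of_hasCompactSupport hc.mul_right
    have i1 : Integrable fun x => ψ x * (τ x * g x) := by
      obtain ⟨C, hC⟩ := hψ.continuous.bounded_above_of_compact_support hc
      exact ti.bdd_mul hψ.continuous.aestronglyMeasurable (Eventually.of_forall hC)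
    have e : ∫ x, ψ x * w x = (∫ x, ψ x * (τ x * g x)) - ∫ x, ψ x * PP g x := by
      rw [← integral_sub i1 i2]; congr 1; funext x; simp only [hw]; ring
    rw [e, ← h2, h1, sub_eq_zero]
    congr 1; funext x; ring
  obtain ⟨ψ0, h01, h02, h03⟩ : ∃ ψ0 : ℝ → ℝ, ContDiff ℝ ∞ ψ0 ∧ HasCompactSupport ψ0 ∧ ∫ x, ψ0 x = 1 := by
    let B : ContDiffBump (0:ℝ) := ⟨1, 2, one_pos, one_lt_two⟩
    exact ⟨B.normed volume, B.contDiff_normed, B.hasCompactSupport_normed, B.integral_normed⟩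
  set c := ∫ x, ψ0 x * w x with hc
  have hwc : ∀ᵐ x, w x - c = 0 := by
    refine ae_eq_zero_of_integral_contDiff_smul_eq_zero (wl.sub (locallyIntegrable_const c)) ?_
    intro ψ hψ hcs
    have hψi : Integrable ψ := hψ.continuous.integrable_of_hasCompactSupport hcs
    have h0i : Integrable ψ0 := h01.continuous.integrable_of_hasCompactSupport h02
    have hk := key (fun x => ψ x - (∫ y, ψ y) * ψ0 x) (hψ.sub (contDiff_const.mul h01))
      (hcs.sub (h02.mul_left))
      (by rw [integral_sub hψi (h0i.const_mul _), integral_const_mul, h03]; ring)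
    have j1 : Integrable fun x => ψ x * w x := by
      simpa using wl.integrable_smul_left_of_hasCompactSupport hψ.continuous hcs
    have j0 : Integrable fun x => ψ0 x * w x := by
      simpa using wl.integrable_smul_left_of_hasCompactSupport h01.continuous h02
    have e1 : ∫ x, (ψ x - (∫ y, ψ y) * ψ0 x) * w x = (∫ x, ψ x * w x) - (∫ y, ψ y) * c := by
      rw [hc, ← integral_const_mul, ← integral_sub j1 (j0.const_mul _)]
      congr 1; funext x; ring
    have e2 : ∫ x, ψ x • (w x - c) = (∫ x, ψ x * w x) - (∫ y, ψ y) * c := by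
      rw [← integral_mul_const, ← integral_sub j1 (hψi.mul_const _)]
      congr 1; funext x; simp only [smul_eq_mul]; ring
    rw [e2, ← e1, hk]
  have hc0 : c = 0 := by
    have h1 : IntegrableOn w (Ioi 0) := ti.integrableOn.sub Pi0
    have h2 : IntegrableOn (fun _ : ℝ => c) (Ioi 0) := by
      refine h1.congr (ae_restrict_of_ae ?_)
      filter_upwards [hwc] with x hx
      linarith
    rw [integrableOn_const_iff] at h2
    simpa using h2
  filter_upwards [hwc] with x hx
  simp only [hw, hc0] at hx
  linarith

end

lemma tr_int {g : ℝ → ℝ} (gm : Measurable g) (g0 : ∀ x, 0 ≤ g x) (k : ℝ → ℝ) :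
    ∫ x, k x ∂(volume.withDensity fun x => ENNReal.ofReal (g x)) = ∫ x, k x * g x := by
  rw [integral_withDensity_eq_integral_toReal_smul gm.ennreal_ofReal
    (Eventually.of_forall fun x => ENNReal.ofReal_lt_top)]
  congr 1; funext x
  rw [ENNReal.toReal_ofReal (g0 x), smul_eq_mul, mul_comm]

lemma tr_itg {g : ℝ → ℝ} (gm : Measurable g) (g0 : ∀ x, 0 ≤ g x) (k : ℝ → ℝ) :
    Integrable k (volume.withDensity fun x => ENNReal.ofReal (g x)) ↔ Integrable fun x => k x * g x := by
  rw [integrable_withDensity_iff_integrable_smul' gm.ennreal_ofReal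
    (Eventually.of_forall fun x => ENNReal.ofReal_lt_top)]
  refine iff_of_eq ?_
  congr 1; funext x
  rw [ENNReal.toReal_ofReal (g0 x), smul_eq_mul, mul_comm]


section
variable {Ω : Type*} [MeasureSpace Ω] [IsProbabilityMeasure (ℙ : Measure Ω)]

lemma le_tv (μ ν : Measure ℝ) [IsProbabilityMeasure μ] [IsProbabilityMeasure ν] {A : Set ℝ}
    (hA : MeasurableSet A) {B : ℝ} (h : tvDist μ ν ≤ B) : ν A ≤ μ A + ENNReal.ofReal B := by
  have h1 : |(μ A).toReal - (ν A).toReal| ≤ B := by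
    have hb : BddAbove {r : ℝ | ∃ s : Set ℝ, MeasurableSet s ∧ r = |(μ s).toReal - (ν s).toReal|} := by
      refine ⟨1, ?_⟩
      rintro r ⟨s, -, rfl⟩
      have a1 : (μ s).toReal ≤ 1 := ENNReal.toReal_le_of_le_ofReal zero_le_one (by simpa using prob_le_one)
      have a2 : (ν s).toReal ≤ 1 := ENNReal.toReal_le_of_le_ofReal zero_le_one (by simpa using prob_le_one)
      have a3 : 0 ≤ (μ s).toReal := ENNReal.toReal_nonneg
      have a4 : 0 ≤ (ν s).toReal := ENNReal.toReal_nonneg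
      rw [abs_le]; constructor <;> linarith
    exact le_trans (le_csSup hb ⟨A, hA, rfl⟩) h
  have h2 := (abs_le.1 h1).1
  calc ν A = ENNReal.ofReal (ν A).toReal := (ENNReal.ofReal_toReal (measure_ne_top _ _)).symm
    _ ≤ ENNReal.ofReal ((μ A).toReal + B) := ENNReal.ofReal_le_ofReal (by linarith)
    _ ≤ ENNReal.ofReal (μ A).toReal + ENNReal.ofReal B := ENNReal.ofReal_add_le
    _ = _ := by rw [ENNReal.ofReal_toReal (measure_ne_top _ _)]

lemma mkTVB (F : Ω → ℝ) (hFm : Measurable F) {g : ℝ → ℝ}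
    (hg : (ℙ : Measure Ω).map F = volume.withDensity (fun x => ENNReal.ofReal (g x)))
    {κ α : ℝ} (htv : ∀ x : ℝ, ∀ t ∈ Set.Ioc (0 : ℝ) 1,
      tvDist ((ℙ : Measure Ω).map (fun ω => Real.sqrt t * F ω + Real.sqrt (1 - t) * x))
          ((ℙ : Measure Ω).map F) ≤ κ * (1 + |x|) * t⁻¹ * (1 - t) ^ α) : TVB g κ α := by
  intro x t ht A hA
  have hm : Measurable fun ω => Real.sqrt t * F ω + Real.sqrt (1 - t) * x := by fun_prop
  have : IsProbabilityMeasure ((ℙ : Measure Ω).map F) := Measure.isProbabilityMeasure_map hFm.aemeasurable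
  have : IsProbabilityMeasure ((ℙ : Measure Ω).map (fun ω => Real.sqrt t * F ω + Real.sqrt (1 - t) * x)) :=
    Measure.isProbabilityMeasure_map hm.aemeasurable
  have h := le_tv _ _ hA (htv x t ht)
  have hm2 : Measurable fun y : ℝ => Real.sqrt t * y + Real.sqrt (1 - t) * x := by fun_prop
  have e : (ℙ : Measure Ω).map (fun ω => Real.sqrt t * F ω + Real.sqrt (1 - t) * x) =
      ((ℙ : Measure Ω).map F).map (fun y => Real.sqrt t * y + Real.sqrt (1 - t) * x) := by
    rw [Measure.map_map hm2 hFm]; rfl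
  rw [e, hg, withDensity_apply _ hA, Measure.map_apply hm2 hA,
    withDensity_apply _ (hm2 hA), ← lintegral_indicator (hm2 hA)] at h
  refine h.trans (le_of_eq ?_)
  congr 1
  refine lintegral_congr fun y => ?_
  by_cases hy : √t * y + √(1-t) * x ∈ A
  · rw [indicator_of_mem hy, indicator_of_mem (show y ∈ _ from hy)]; simp
  · rw [indicator_of_notMem hy, indicator_of_notMem (show y ∉ _ from hy)]; simp

lemma mom_ge {ρ : Type*} [MeasurableSpace ρ] {μ : Measure ρ} [IsProbabilityMeasure μ] {X : ρ → ℝ}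
    (hX : Integrable X μ) (h1 : ∫ x, X x ∂μ = 1) {p : ℝ} (hp : 1 ≤ p)
    (hi : Integrable (fun x => |X x| ^ p) μ) : 1 ≤ ∫ x, |X x| ^ p ∂μ := by
  have h2 : ∫ x, (1 + p * (X x - 1)) ∂μ ≤ ∫ x, |X x| ^ p ∂μ := by
    refine integral_mono ((integrable_const _).add ((hX.sub (integrable_const _)).const_mul p)) hi fun x => ?_
    have := one_add_mul_self_le_rpow_one_add (s := |X x| - 1) (by linarith [abs_nonneg (X x)]) hp
    rw [show 1 + (|X x| - 1) = |X x| by ring] at this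
    refine le_trans ?_ this
    have := le_abs_self (X x)
    simp only
    nlinarith
  have h3 : ∫ x, (1 + p * (X x - 1)) ∂μ = 1 := by
    have hq : Integrable (fun x => p * (X x - 1)) μ := (hX.sub (integrable_const _)).const_mul p
    rw [integral_add (integrable_const _) hq,
      integral_const_mul, integral_sub hX (integrable_const _), h1]
    simp
  linarith

lemma momZ (Z : Ω → ℝ) (hZm : Measurable Z) (hZ : (ℙ : Measure Ω).map Z = gaussianReal 0 1)
    {η : ℝ} (hη : 0 < η) : 1 ≤ ∫ ω, |Z ω| ^ (η + 2) ∂ℙ := by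
  have e : ∫ ω, |Z ω| ^ (η + 2) ∂ℙ = ∫ x, |x| ^ (η + 2) ∂(gaussianReal 0 1) := by
    rw [← hZ, integral_map hZm.aemeasurable]
    have : Measurable fun x : ℝ => |x| ^ (η + 2) := by fun_prop
    exact this.aestronglyMeasurable
  have e2 : ∀ x : ℝ, |x| ^ (η + 2) = |x ^ 2| ^ ((η + 2) / 2) := by
    intro x
    rw [abs_pow, ← Real.rpow_natCast, ← Real.rpow_mul (abs_nonneg x)]
    congr 1; push_cast; ring
  have hm2 : MemLp id (2:NNReal) (gaussianReal 0 1) := memLp_id_gaussianReal 2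
  have i2 : Integrable (fun x : ℝ => x ^ 2) (gaussianReal 0 1) := hm2.integrable_sq
  have v : ∫ x, x ^ 2 ∂(gaussianReal 0 1) = 1 := by
    have := variance_id_gaussianReal (μ := 0) (v := 1)
    rw [variance_of_integral_eq_zero aemeasurable_id (by simp)] at this
    simpa using this
  have hp : MemLp id ((η + 2).toNNReal) (gaussianReal 0 1) := memLp_id_gaussianReal _
  have ip : Integrable (fun x : ℝ => |x| ^ (η + 2)) (gaussianReal 0 1) := by
    have := hp.integrable_norm_rpow (by simp; linarith) (by simp)
    simpa [Real.coe_toNNReal _ (show 0 ≤ η + 2 by linarith)] using this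
  rw [e]
  simp_rw [e2] at ip ⊢
  exact mom_ge i2 v (by linarith) ip

lemma mkTS (F : Ω → ℝ) (hFm : Measurable F) {g : ℝ → ℝ} (gm : Measurable g) (g0 : ∀ x, 0 ≤ g x)
    (hg : (ℙ : Measure Ω).map F = volume.withDensity (fun x => ENNReal.ofReal (g x)))
    (hF1 : ∫ ω, F ω ∂ℙ = 0) (hF2 : ∫ ω, (F ω) ^ 2 ∂ℙ = 1)
    (τ : ℝ → ℝ) (hτm : Measurable τ)
    (hstein : ∀ g : ℝ → ℝ, ContDiff ℝ 1 g → HasCompactSupport g →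
      ∫ ω, F ω * g (F ω) ∂ℙ = ∫ ω, τ (F ω) * deriv g (F ω) ∂ℙ)
    {η : ℝ} (hη : 0 < η)
    (hτmom : Integrable (fun ω => |τ (F ω)| ^ (2 + η)) ℙ) : 
    TS g τ ∧ TS.dd g τ = ∫ ω, (1 - τ (F ω)) ^ 2 ∂ℙ ∧ 1 ≤ ∫ ω, |τ (F ω)| ^ (η + 2) ∂ℙ := by
  have T : ∀ k : ℝ → ℝ, Measurable k → ∫ ω, k (F ω) ∂ℙ = ∫ x, k x * g x := by
    intro k hk
    rw [← tr_int gm g0, ← hg, integral_map hFm.aemeasurable hk.aestronglyMeasurable]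
  have I : ∀ k : ℝ → ℝ, Measurable k → (Integrable (fun ω => k (F ω)) ℙ ↔ Integrable fun x => k x * g x) := by
    intro k hk
    rw [← tr_itg gm g0, ← hg, integrable_map_measure hk.aestronglyMeasurable hFm.aemeasurable]; rfl
  have gi : Integrable g := by
    have := (I (fun _ => 1) measurable_const).1 (integrable_const _)
    simpa using this
  have m0 : ∫ x, g x = 1 := by
    have := T (fun _ => 1) measurable_const
    simpa using this.symm
  have g2 : Integrable (fun x => x ^ 2 * g x) :=
    (I (fun x => x ^ 2) (by fun_prop)).1 (Integrable.of_integral_ne_zero (by rw [hF2]; exact one_ne_zero))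
  have m2 : ∫ x, x ^ 2 * g x = 1 := by rw [← T (fun x => x ^ 2) (by fun_prop), hF2]
  have m1 : ∫ x, x * g x = 0 := by rw [← T (fun x => x) (by fun_prop), hF1]
  have g1 : Integrable (fun x => x * g x) := by
    refine (gi.add g2).mono' (by fun_prop) (Eventually.of_forall fun x => ?_)
    simp only [Pi.add_apply, norm_mul, Real.norm_eq_abs, abs_of_nonneg (g0 x)]
    have : |x| ≤ 1 + x ^ 2 := by nlinarith [sq_abs x, sq_nonneg (|x| - 1)]
    nlinarith [g0 x]
  have hei : Integrable (fun ω => (1 - τ (F ω)) ^ 2) ℙ := by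
    refine (((integrable_const (4:ℝ)).add (hτmom.const_mul 2))).mono'
      (Measurable.aestronglyMeasurable (by fun_prop)) (Eventually.of_forall fun ω => ?_)
    simp only [Pi.add_apply]
    rw [Real.norm_of_nonneg (sq_nonneg _)]
    have h1 : τ (F ω) ^ 2 ≤ 1 + |τ (F ω)| ^ (2 + η) := by
      rcases le_or_gt |τ (F ω)| 1 with h | h
      · have : 0 ≤ |τ (F ω)| ^ (2 + η) := by positivity
        nlinarith [sq_abs (τ (F ω)), abs_nonneg (τ (F ω))]
      · have := Real.rpow_le_rpow_of_exponent_le h.le (show (2:ℝ) ≤ 2 + η by linarith)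
        rw [Real.rpow_two, sq_abs] at this
        linarith
    nlinarith [sq_nonneg (1 + τ (F ω))]
  have ei := (I (fun x => (1 - τ x) ^ 2) (by fun_prop)).1 hei
  have ti : Integrable (fun x => τ x * g x) := by
    refine ((gi.const_mul 2).add ei).mono' (by fun_prop) (Eventually.of_forall fun x => ?_)
    simp only [Pi.add_apply, norm_mul, Real.norm_eq_abs, abs_of_nonneg (g0 x)]
    have : |τ x| ≤ 2 + (1 - τ x) ^ 2 := by
      rcases abs_cases (τ x) with h | h <;> nlinarith [sq_nonneg (τ x)]
    nlinarith [g0 x]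
  have tg : ∀ᵐ x, τ x * g x = PP g x := by
    refine stein_ae gm g0 g1 g2 ti fun u hu hc => ?_
    have h1 := hstein u hu hc
    have hum := hu.continuous.measurable
    have hdm : Measurable (deriv u) := measurable_deriv u
    rw [T (fun x => x * u x) (by fun_prop), T (fun x => τ x * deriv u x) (by fun_prop)] at h1
    exact h1
  have h : TS g τ := ⟨gm, g0, gi, g2, hτm, tg, ei, m0, m1, m2⟩
  refine ⟨h, (T (fun x => (1 - τ x) ^ 2) (by fun_prop)).symm, ?_⟩
  refine mom_ge (X := fun ω => τ (F ω)) ((I τ hτm).2 ti) ?_ (by linarith) ?_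
  · rw [T τ hτm, h.tau_one]
  · rw [add_comm]; exact hτmom

end


lemma min_dens (f : ℝ → ℝ) [IsProbabilityMeasure (volume.withDensity fun x => ENNReal.ofReal (f x))] :
    ∃ g : ℝ → ℝ, Measurable g ∧ (∀ x, 0 ≤ g x) ∧ (∀ x, g x ≤ max (f x) 0) ∧
      (∀ A, MeasurableSet A → ∫⁻ x in A, ENNReal.ofReal (f x) = ∫⁻ x in A, ENNReal.ofReal (g x)) ∧
      (volume.withDensity fun x => ENNReal.ofReal (f x)) = volume.withDensity fun x => ENNReal.ofReal (g x) := by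
  obtain ⟨k, hk, hkf, he⟩ := exists_measurable_le_lintegral_eq (μ := volume) (fun x : ℝ => ENNReal.ofReal (f x))
  have hkx : ∀ x, k x ≤ ENNReal.ofReal (f x) := hkf
  have hfin : ∀ x, k x ≠ ⊤ := fun x => ((hkx x).trans_lt ENNReal.ofReal_lt_top).ne
  have hofr : ∀ x, ENNReal.ofReal (k x).toReal = k x := fun x => ENNReal.ofReal_toReal (hfin x)
  have htot : ∫⁻ x, ENNReal.ofReal (f x) = 1 := by
    have := measure_univ (μ := volume.withDensity fun x => ENNReal.ofReal (f x))
    rwa [withDensity_apply _ MeasurableSet.univ, Measure.restrict_univ] at this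
  have hset : ∀ A, MeasurableSet A → ∫⁻ x in A, ENNReal.ofReal (f x) = ∫⁻ x in A, ENNReal.ofReal (k x).toReal := by
    intro A hA
    simp_rw [hofr]
    have h1 := lintegral_add_compl (μ := volume) (fun x => ENNReal.ofReal (f x)) hA
    have h2 := lintegral_add_compl (μ := volume) k hA
    have h3 : ∫⁻ x in A, k x ≤ ∫⁻ x in A, ENNReal.ofReal (f x) := lintegral_mono hkf
    have h4 : ∫⁻ x in Aᶜ, k x ≤ ∫⁻ x in Aᶜ, ENNReal.ofReal (f x) := lintegral_mono hkf
    have hc : ∫⁻ x in Aᶜ, ENNReal.ofReal (f x) ≠ ⊤ :=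
      ((setLIntegral_le_lintegral _ _).trans_lt (by rw [htot]; exact ENNReal.one_lt_top)).ne
    refine le_antisymm ?_ h3
    have h5 : (∫⁻ x in A, ENNReal.ofReal (f x)) + ∫⁻ x in Aᶜ, ENNReal.ofReal (f x) ≤
        (∫⁻ x in A, k x) + ∫⁻ x in Aᶜ, ENNReal.ofReal (f x) := by
      rw [h1, he, ← h2]; gcongr
    exact (ENNReal.add_le_add_iff_right hc).1 h5
  refine ⟨fun x => (k x).toReal, hk.ennreal_toReal, fun x => ENNReal.toReal_nonneg, fun x => ?_, hset, ?_⟩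
  · refine ENNReal.toReal_le_of_le_ofReal (le_max_right _ _) ((hkx x).trans ?_)
    exact ENNReal.ofReal_le_ofReal (le_max_left _ _)
  · refine Measure.ext fun A hA => ?_
    rw [withDensity_apply _ hA, withDensity_apply _ hA, hset A hA]

lemma u_ge (t : ℝ) (ht : 0 ≤ t) : -(Real.exp 1)⁻¹ ≤ t * Real.log t := by
  rcases ht.eq_or_lt with rfl | ht
  · simp; positivity
  have h := Real.add_one_le_exp (-1 - Real.log t)
  rw [Real.exp_sub, Real.exp_log ht, Real.exp_neg, le_div_iff₀ ht] at h
  linarith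

lemma dens_cmp {f g : ℝ → ℝ} (gm : Measurable g) (g0 : ∀ x, 0 ≤ g x) (gi : Integrable g)
    (gf : ∀ x, g x ≤ max (f x) 0)
    (hA : ∀ A, MeasurableSet A → ∫⁻ x in A, ENNReal.ofReal (f x) = ∫⁻ x in A, ENNReal.ofReal (g x))
    (hi : Integrable (fun x => f x * Real.log (f x / gaussianPDFReal 0 1 x))) :
    ∀ᵐ x, f x * Real.log (f x / gaussianPDFReal 0 1 x) ≤ g x * Real.log (g x / gaussianPDFReal 0 1 x) +
      (Real.exp 1)⁻¹ * {x | g x = 0}.indicator (gaussianPDFReal 0 1) x := by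
  set φ := gaussianPDFReal 0 1 with hφd
  have φp : ∀ x, 0 < φ x := fun x => gaussianPDFReal_pos 0 1 x one_ne_zero
  have φm : Measurable φ := measurable_gaussianPDFReal 0 1
  have nul : ∀ A, MeasurableSet A → ∀ p : ℝ → ℝ, Measurable p → (∀ x ∈ A, p x ≤ f x) →
      (∀ x ∈ A, g x < p x) → volume A = 0 := by
    intro A hAm p pm hpf hgp
    by_contra h0
    have hfin : ∫⁻ x in A, ENNReal.ofReal (g x) ≠ ⊤ :=
      ((setLIntegral_le_lintegral _ _).trans_lt gi.lintegral_lt_top).ne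
    have h1 := setLIntegral_strict_mono hAm h0 pm.ennreal_ofReal hfin (Eventually.of_forall fun x hx =>
      (ENNReal.ofReal_lt_ofReal_iff ((g0 x).trans_lt (hgp x hx))).2 (hgp x hx))
    have h2 : ∫⁻ x in A, ENNReal.ofReal (p x) ≤ ∫⁻ x in A, ENNReal.ofReal (f x) :=
      setLIntegral_mono' hAm fun x hx => ENNReal.ofReal_le_ofReal (hpf x hx)
    rw [hA A hAm] at h2
    exact absurd h1 (not_lt.2 h2)
  set h := fun x => f x * Real.log (f x / φ x) with hh
  set h' := hi.1.mk h with hh'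
  have h'm : Measurable h' := hi.1.stronglyMeasurable_mk.measurable
  obtain ⟨N, hNs, hNm, hN0⟩ := exists_measurable_superset_of_null (ae_iff.1 hi.1.ae_eq_mk)
  have heq : ∀ x, x ∉ N → h x = h' x := fun x hx => by
    by_contra hne; exact hx (hNs hne)
  have hgm : Measurable fun x => g x * Real.log (g x / φ x) := by fun_prop
  have hs : ∀ x t : ℝ, t * Real.log (t / φ x) = φ x * ((t / φ x) * Real.log (t / φ x)) := by
    intro x t; have := (φp x).ne'; field_simp
  -- zero part
  have z : ∀ᵐ x, x ∉ {x | g x = 0 ∧ (Real.exp 1)⁻¹ * φ x < h' x} ∩ Nᶜ := by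
    refine measure_eq_zero_iff_ae_notMem.1 ?_
    refine nul _ (((gm (measurableSet_singleton 0)).inter
      (measurableSet_lt (φm.const_mul _) h'm)).inter hNm.compl) φ φm ?_ ?_
    · rintro x ⟨⟨hx1, hx2⟩, hx3⟩
      rw [← heq x hx3] at hx2
      simp only [hh, hs x (f x)] at hx2
      set t := f x / φ x with ht
      have hx4 : (Real.exp 1)⁻¹ < t * Real.log t := by
        rw [mul_comm] at hx2; exact lt_of_mul_lt_mul_left hx2 (φp x).le
      have he : 0 < (Real.exp 1)⁻¹ := by positivity
      have h1 : 1 ≤ t := by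
        by_contra hlt
        push Not at hlt
        rcases le_or_gt 0 t with h0 | h0
        · have := Real.log_nonpos h0 hlt.le
          nlinarith
        · have := u_ge (-t) (by linarith)
          rw [Real.log_neg_eq_log] at this
          linarith
      rwa [ht, le_div_iff₀ (φp x), one_mul] at h1
    · rintro x ⟨⟨hx1, hx2⟩, hx3⟩
      have hx1 : g x = 0 := hx1
      rw [hx1]; exact φp x
  have q : ∀ q : ℚ, ∀ᵐ x, x ∉ {x | 0 < g x ∧ g x < q * φ x ∧ g x * Real.log (g x / φ x) < h' x ∧
      φ x * (q * Real.log q) < h' x} ∩ Nᶜ := by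
    intro q
    refine measure_eq_zero_iff_ae_notMem.1 ?_
    refine nul _ (((measurableSet_lt measurable_const gm).inter ((measurableSet_lt gm (φm.const_mul _)).inter
      ((measurableSet_lt hgm h'm).inter (measurableSet_lt (φm.mul_const _) h'm)))).inter hNm.compl)
      (fun x => q * φ x) (φm.const_mul _) ?_ ?_
    · rintro x ⟨⟨hx0, hx1, hx2, hx3⟩, hx4⟩
      rw [← heq x hx4] at hx2 hx3
      simp only [hh, hs x (f x), hs x (g x)] at hx2 hx3
      have hx2 := lt_of_mul_lt_mul_left hx2 (φp x).le
      have hx3 := lt_of_mul_lt_mul_left hx3 (φp x).le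
      have hgf : g x ≤ f x := by
        rcases le_max_iff.1 (gf x) with h | h
        · exact h
        · linarith
      by_contra hlt
      push Not at hlt
      have := Real.convexOn_mul_log.le_max_of_mem_Icc (x := g x / φ x) (y := q) (z := f x / φ x)
        (div_nonneg (g0 x) (φp x).le) (show (0:ℝ) ≤ q from by
          by_contra hq; push Not at hq; nlinarith [φp x]) ⟨by gcongr; exact (φp x).le, by
            rw [div_le_iff₀ (φp x)]; exact hlt.le⟩
      rcases le_max_iff.1 this with h | h <;> linarith
    · rintro x ⟨⟨hx0, hx1, hx2, hx3⟩, hx4⟩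
      exact hx1
  have hNae : ∀ᵐ x, x ∉ N := measure_eq_zero_iff_ae_notMem.1 hN0
  filter_upwards [z, ae_all_iff.2 q, hNae] with x hz hq hxN
  by_contra hlt
  push Not at hlt
  have hlt' : g x * Real.log (g x / φ x) + (Real.exp 1)⁻¹ * {x | g x = 0}.indicator φ x < h' x := by
    rw [← heq x hxN]; exact hlt
  rcases (g0 x).eq_or_lt with h0 | h0
  · rw [indicator_of_mem (show x ∈ {x | g x = 0} from h0.symm), ← h0, zero_mul, zero_add] at hlt'
    exact hz ⟨⟨h0.symm, hlt'⟩, hxN⟩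
  · rw [indicator_of_notMem (show x ∉ {x | g x = 0} from h0.ne'), mul_zero, add_zero] at hlt'
    have hgf : g x ≤ f x := by
      rcases le_max_iff.1 (gf x) with h | h
      · exact h
      · linarith
    have hlt2 := hlt'
    rw [← heq x hxN] at hlt2
    simp only [hh] at hlt2
    have hne : g x < f x := lt_of_le_of_ne hgf fun he => by rw [he] at hlt2; exact lt_irrefl _ hlt2
    rw [hs x (f x), hs x (g x)] at hlt2
    have hlt3 := lt_of_mul_lt_mul_left hlt2 (φp x).le
    obtain ⟨r, hr1, hr2⟩ := exists_rat_btwn (div_lt_div_of_pos_right hne (φp x))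
    refine hq r ⟨⟨h0, (div_lt_iff₀ (φp x)).1 hr1, hlt', ?_⟩, hxN⟩
    rw [← heq x hxN]
    simp only [hh]
    rw [hs x (f x)]
    refine mul_lt_mul_of_pos_left ?_ (φp x)
    by_contra hge
    push Not at hge
    have := Real.convexOn_mul_log.lt_right_of_left_lt (x := g x / φ x) (y := f x / φ x) (z := (r:ℝ))
      (div_nonneg (g0 x) (φp x).le) (div_nonneg ((g0 x).trans hgf) (φp x).le)
      (by rw [openSegment_eq_Ioo (hr1.trans hr2)]; exact ⟨hr1, hr2⟩) (lt_of_lt_of_le hlt3 hge)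
    linarith


lemma num_log {κ : ℝ} (hκ : 0 < κ) :
    51/10 + Real.log (233 * κ) ≤ 10.87 * Real.log (2 * κ + 2) := by
  have hb := one_add_mul_le_pow (a := (9 * κ - 1) / 10) (by linarith) 10
  have h1 : 233 * κ ≤ (9.03) * (1 + κ) ^ 10 := by
    have e : (1 + (9 * κ - 1) / 10) ^ 10 = (9/10) ^ 10 * (1 + κ) ^ 10 := by
      rw [← mul_pow]; congr 1; ring
    rw [e] at hb
    have hp : 0 < (1 + κ) ^ 10 := by positivity
    push_cast at hb
    nlinarith
  have h2 : Real.log (233 * κ) ≤ Real.log 9.03 + 10 * Real.log (1 + κ) := by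
    have := Real.log_le_log (by positivity) h1
    rw [Real.log_mul (x := 9.03) (by norm_num) (by positivity), Real.log_pow] at this
    exact_mod_cast this
  have h3 : 5 * Real.log 9.03 ≤ 16 * Real.log 2 := by
    have := Real.log_le_log (by norm_num) (show (9.03:ℝ) ^ 5 ≤ 2 ^ 16 by norm_num)
    rw [Real.log_pow, Real.log_pow] at this
    exact_mod_cast this
  have h4 := Real.log_two_gt_d9
  have h5 : Real.log (2 * κ + 2) = Real.log 2 + Real.log (1 + κ) := by
    rw [← Real.log_mul (by norm_num) (by positivity)]; congr 1; ring
  have h6 : 0 ≤ Real.log (1 + κ) := Real.log_nonneg (by linarith)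
  rw [h5]
  linarith

lemma num_C {κ η a b C : ℝ} (hκ : 0 < κ) (hη : 0 < η) (ha : 1 ≤ a) (hb : 1 ≤ b)
    (hC : C = 2 * (4 * κ + 4) ^ (η / (η + 1)) * a ^ (1 / (η + 1)) * (1 + b) ^ (1 / (η + 1))) :
    8 ≤ C * ((η + 1) / η) ∧ 10.87 * Real.log (2 * κ + 2) ≤ C * ((η + 1) / η) := by
  set θ := η / (η + 1) with hθ
  have h0 : 0 < θ := by positivity
  have h1 : θ ≤ 1 := by rw [hθ, div_le_one (by positivity)]; linarith
  have e1 : 1 / (η + 1) = 1 - θ := by rw [hθ]; field_simp; ring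
  have e2 : (η + 1) / η = 1 / θ := by rw [hθ]; field_simp
  rw [e1] at hC
  rw [e2, mul_one_div]
  have hCl : 4 * (2 * κ + 2) ^ θ ≤ C := by
    have x1 : 1 ≤ a ^ (1 - θ) := Real.one_le_rpow ha (by linarith)
    have x2 : (2:ℝ) ^ (1 - θ) ≤ (1 + b) ^ (1 - θ) := Real.rpow_le_rpow (by norm_num) (by linarith) (by linarith)
    have x3 : (4 * κ + 4) ^ θ = 2 ^ θ * (2 * κ + 2) ^ θ := by
      rw [← Real.mul_rpow (by norm_num) (by positivity)]; congr 1; ring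
    have x4 : (2:ℝ) ^ θ * 2 ^ (1 - θ) = 2 := by
      rw [← Real.rpow_add (by norm_num)]; simp
    calc 4 * (2 * κ + 2) ^ θ = 2 * ((2:ℝ) ^ θ * 2 ^ (1 - θ)) * (2 * κ + 2) ^ θ := by rw [x4]; ring
      _ = 2 * (4 * κ + 4) ^ θ * 1 * 2 ^ (1 - θ) := by rw [x3]; ring
      _ ≤ 2 * (4 * κ + 4) ^ θ * a ^ (1 - θ) * (1 + b) ^ (1 - θ) := by gcongr
      _ = C := hC.symm
  constructor
  · rw [le_div_iff₀ h0]
    have y1 : (2:ℝ) ^ θ ≤ (2 * κ + 2) ^ θ := Real.rpow_le_rpow (by norm_num) (by linarith) h0.le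
    have y2 : (2:ℝ) ^ (1 - θ) ≤ 2 - θ := by
      have := rpow_one_add_le_one_add_mul_self (s := 1) (by norm_num) (p := 1 - θ) (by linarith) (by linarith)
      norm_num at this; linarith
    have y3 : (2:ℝ) ^ θ * 2 ^ (1 - θ) = 2 := by
      rw [← Real.rpow_add (by norm_num)]; simp
    have y4 : 0 < (2:ℝ) ^ θ := by positivity
    have y5 : 2 * θ ≤ (2:ℝ) ^ θ := by
      have : 2 ≤ (2:ℝ) ^ θ * (2 - θ) := by nlinarith
      nlinarith [sq_nonneg (1 - θ)]
    linarith
  · rw [le_div_iff₀ h0]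
    have hl : 0 ≤ Real.log (2 * κ + 2) := Real.log_nonneg (by linarith)
    have z := Real.add_one_le_exp (θ * Real.log (2 * κ + 2) - 1)
    rw [Real.exp_sub, sub_add_cancel, le_div_iff₀ (Real.exp_pos 1), mul_comm θ (Real.log _),
      ← Real.rpow_def_of_pos (by positivity)] at z
    have he := Real.exp_one_gt_d9
    have := mul_nonneg hl h0.le
    nlinarith

lemma num_fin {κ η β Δ C X : ℝ} (hκ : 0 < κ) (hη : 0 < η) (hβ : 0 < β) (hβ1 : β ≤ 1)
    (hΔ0 : 0 ≤ Δ) (hΔ1 : Δ ≤ 1)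
    (h8 : 8 ≤ C * ((η + 1) / η)) (hL : 10.87 * Real.log (2 * κ + 2) ≤ C * ((η + 1) / η))
    (hX : ∀ v, 0 < v → v ≤ 1/13 → X ≤ Δ * (41/10 + Real.log (1 / v)) + 233 * κ * v ^ β / β) :
    X ≤ ((η + 1) / (β * η)) * Δ * |Real.log Δ| + (C * (η + 1) / (β * η)) * Δ := by
  have choice : ∀ s, 0 < s → 233 * κ * (min (1/13) (s ^ (1 / β))) ^ β ≤ 233 * κ * s := by
    intro s hs
    refine mul_le_mul_of_nonneg_left ?_ (by positivity)
    calc _ ≤ (s ^ (1 / β)) ^ β := Real.rpow_le_rpow (by positivity) (min_le_right _ _) hβ.le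
      _ = s := by rw [← Real.rpow_mul hs.le, one_div_mul_cancel hβ.ne', Real.rpow_one]
  rcases hΔ0.eq_or_lt with h0 | h0
  · rw [← h0]
    simp only [mul_zero, zero_mul, add_zero]
    by_contra hpos
    push Not at hpos
    have hs : 0 < X * β / (2 * (233 * κ)) := by positivity
    have h1 := hX (min (1/13) ((X * β / (2 * (233 * κ))) ^ (1 / β))) (by positivity) (min_le_left _ _)
    have h2 := choice _ hs
    rw [← h0, zero_mul, zero_add, le_div_iff₀ hβ] at h1
    have e : 233 * κ * (X * β / (2 * (233 * κ))) = X * β / 2 := by field_simp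
    rw [e] at h2
    nlinarith [mul_pos hpos hβ]
  · have hs : 0 < Δ / (233 * κ) := by positivity
    set v := min (1/13) ((Δ / (233 * κ)) ^ (1 / β)) with hv
    have hv0 : 0 < v := by positivity
    have h1 := hX v hv0 (min_le_left _ _)
    have h2 := choice _ hs
    rw [mul_div_cancel₀ _ (by positivity)] at h2
    have hlog : |Real.log Δ| = - Real.log Δ := abs_of_nonpos (Real.log_nonpos h0.le hΔ1)
    set K := C * ((η + 1) / η) with hK
    have hm : 1 ≤ (η + 1) / η := by rw [le_div_iff₀ hη]; linarith
    have key : 51/10 + β * Real.log (1 / v) ≤ |Real.log Δ| + K := by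
      rcases min_choice (1/13) ((Δ / (233 * κ)) ^ (1 / β)) with h | h
      · rw [hv, h]
        have : Real.log (1 / (1/13)) ≤ 2.9 := by
          have a := Real.log_le_log (by norm_num) (show (1 / (1/13) : ℝ) ≤ 2 ^ 4 by norm_num)
          rw [Real.log_pow] at a
          push_cast at a
          have := Real.log_two_lt_d9
          linarith
        have hn : 0 ≤ Real.log (1 / (1/13)) := Real.log_nonneg (by norm_num)
        nlinarith [abs_nonneg (Real.log Δ)]
      · rw [hv, h]
        have e : β * Real.log (1 / (Δ / (233 * κ)) ^ (1 / β)) = Real.log (233 * κ) + |Real.log Δ| := by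
          rw [one_div ((Δ / (233 * κ)) ^ (1 / β)), Real.log_inv, Real.log_rpow hs, hlog,
            Real.log_div h0.ne' (by positivity)]
          field_simp; ring
        rw [e]
        linarith [num_log hκ]
    have e1 : ((η + 1) / (β * η)) * Δ * |Real.log Δ| + (C * (η + 1) / (β * η)) * Δ =
        Δ * ((η + 1) / η * |Real.log Δ| + K) / β := by
      rw [hK]; field_simp
    rw [e1, le_div_iff₀ hβ]
    have e2 : X * β ≤ Δ * (41/10 + Real.log (1 / v)) * β + Δ := by
      have h3 : 233 * κ * v ^ β / β ≤ Δ / β := by gcongr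
      have := mul_le_mul_of_nonneg_right (h1.trans (add_le_add_right h3 _)) hβ.le
      rwa [add_mul, div_mul_cancel₀ _ hβ.ne'] at this
    refine e2.trans ?_
    have e3 : (41/10 + Real.log (1 / v)) * β + 1 ≤ (η + 1) / η * |Real.log Δ| + K := by
      nlinarith [abs_nonneg (Real.log Δ)]
    nlinarith

end

/-- Theorem `main1d` of the paper: an entropic bound
`D(F‖Z) ≤ ((η+1)/((1∧2α)η)) Δ |log Δ| + (C_η(η+1)/((1∧2α)η)) Δ` for a centered
unit-variance `F` with density `f`, Stein factor `τ_F` with finite `(2+η)`-moment,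
satisfying the total variation smoothness assumption. -/
theorem stmt8 {Ω : Type*} [MeasureSpace Ω] [IsProbabilityMeasure (ℙ : Measure Ω)]
    (F Z : Ω → ℝ) (hFm : Measurable F) (hZm : Measurable Z)
    (f : ℝ → ℝ) (hf : (ℙ : Measure Ω).map F = volume.withDensity (fun x => ENNReal.ofReal (f x)))
    (hF1 : ∫ ω, F ω ∂ℙ = 0) (hF2 : ∫ ω, (F ω) ^ 2 ∂ℙ = 1)
    (hZ : (ℙ : Measure Ω).map Z = gaussianReal 0 1) (hindep : IndepFun F Z ℙ)
    (τ : ℝ → ℝ) (hτm : Measurable τ)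
    (hstein : ∀ g : ℝ → ℝ, ContDiff ℝ 1 g → HasCompactSupport g →
      ∫ ω, F ω * g (F ω) ∂ℙ = ∫ ω, τ (F ω) * deriv g (F ω) ∂ℙ)
    (κ α η : ℝ) (hκ : 0 < κ) (hα : 0 < α) (hη : 0 < η)
    (hτmom : Integrable (fun ω => |τ (F ω)| ^ (2 + η)) ℙ)
    (htv : ∀ x : ℝ, ∀ t ∈ Set.Ioc (0 : ℝ) 1,
      tvDist ((ℙ : Measure Ω).map (fun ω => Real.sqrt t * F ω + Real.sqrt (1 - t) * x))
          ((ℙ : Measure Ω).map F) ≤ κ * (1 + |x|) * t⁻¹ * (1 - t) ^ α)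
    (Δ : ℝ) (hΔdef : Δ = ∫ ω, (1 - τ (F ω)) ^ 2 ∂ℙ) (hΔ : Δ ≤ 1)
    (Cη : ℝ)
    (hCη : Cη = 2 * (4 * κ + 4) ^ (η / (η + 1)) *
      (∫ ω, |Z ω| ^ (η + 2) ∂ℙ) ^ (1 / (η + 1)) *
      (1 + ∫ ω, |τ (F ω)| ^ (η + 2) ∂ℙ) ^ (1 / (η + 1))) :
    ∫ x, f x * Real.log (f x / gaussianPDFReal 0 1 x) ≤
      ((η + 1) / (min 1 (2 * α) * η)) * Δ * |Real.log Δ| +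
        (Cη * (η + 1) / (min 1 (2 * α) * η)) * Δ := by
  have hp : IsProbabilityMeasure (volume.withDensity fun x => ENNReal.ofReal (f x)) := by
    rw [← hf]; exact Measure.isProbabilityMeasure_map hFm.aemeasurable
  obtain ⟨g, gm, g0, gf, gA, gw⟩ := min_dens f
  obtain ⟨h, hd, hτ1⟩ := mkTS F hFm gm g0 (hf.trans gw) hF1 hF2 τ hτm hstein hη hτmom
  have hB : TVB g κ α := mkTVB F hFm (hf.trans gw) htv
  rw [← hΔdef] at hd
  have hd1 : TS.dd g τ ≤ 1 := hd.le.trans hΔ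
  have hΔ0 : 0 ≤ Δ := hd ▸ h.dd_nonneg
  have hβ : 0 < min 1 (2 * α) := lt_min one_pos (by linarith)
  obtain ⟨h8, hL⟩ := num_C hκ hη (momZ Z hZm hZ hη) hτ1 hCη
  by_cases hi : Integrable (fun x => f x * Real.log (f x / gaussianPDFReal 0 1 x))
  · refine num_fin hκ hη hβ (min_le_left _ _) hΔ0 hΔ h8 hL fun v hv hv1 => ?_
    obtain ⟨d1, d2⟩ := h.Dg hκ hα hB hd1 hv hv1
    have hq := h.Qe
    have hqi : Integrable (fun x => (Real.exp 1)⁻¹ * {x | g x = 0}.indicator (gaussianPDFReal 0 1) x) :=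
      ((integrable_gaussianPDFReal 0 1).indicator (gm (measurableSet_singleton 0))).const_mul _
    have := integral_mono_ae hi (d1.add hqi) (dens_cmp gm g0 h.gi gf gA hi)
    simp only [Pi.add_apply] at this
    rw [integral_add d1 hqi, integral_const_mul] at this
    rw [hd] at d2 hq
    linarith
  · rw [integral_undef hi]
    have hC : 0 ≤ Cη * (η + 1) / (min 1 (2 * α) * η) := by
      have e : Cη * (η + 1) / (min 1 (2 * α) * η) = Cη * ((η + 1) / η) / min 1 (2 * α) := by
        field_simp
      rw [e]
      exact div_nonneg (by linarith) hβ.le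
    have := mul_nonneg hC hΔ0
    positivity
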